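/- arXiv:math/0502270 — 2 statements merged into one kernel-verified Lean document; each statement's English description precedes it below -/
import Mathlib

section
/- Let (W,S) be a Coxeter system satisfying: (0) for all s,t ∈ S with m(s,t) even, m(s,t) = 2; (1) for all s ≠ t ∈ S with m(s,t) odd, {s,t} is a maximal spherical subset of S; (2) there is no three-element subset {s,t,u} ⊆ S such that m(s,t) and m(t,u) are both odd; (3) for all s ≠ t ∈ S with m(s,t) odd, the number of maximal spherical subsets of S intersecting {s,t} is at most two. Let (W',S') be a Coxeter system and suppose there exists a group isomorphism φ : W → W'. Then there does not exist a three-element subset {s',t',u'} ⊆ S' such that m'(s',t') and m'(t',u') are both odd. -/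
/-!
The odd edges of `(W, S)` are sparse. By (1) and (3), one endpoint `t` of an odd edge (the *pendant*
one) has no neighbour, i.e. no generator joined to it by a finite label, besides the other endpoint
`σ t` (the *base*); by (0), (1) and (3) the remaining neighbours of the base commute with it and with
each other; by (2), odd edges are disjoint. This is recorded in `CondTwo.Shape`, and
`CondTwo.exists_shape` derives it. For such a system, every missing edge gives a splitting of a
parabolic subgroup as an amalgamated product of smaller ones (`CondTwo.exists_splitting`), and normal
forms in amalgams yield two facts about the abstract group `W`.

* `CondTwo.eq_one_of_mem_commutator`: the commutator subgroup has no element of order two. Torsion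
  is conjugate into the dihedral group of an odd edge or into an elementary abelian parabolic
  subgroup, and characters with values in `{1, -1}` detect the involutions of both.
* `CondTwo.exists_commuting_conj`: if an involution `r` inverts two nontrivial elements `x`, `y` of
  odd order, then some `c` with `c * c = 1` that commutes with `r` conjugates `x` to an element
  commuting with `y`. Up to conjugacy `r` is a base, `x` and `y` are rotations in the dihedral group
  of its odd edge, and the centraliser of a base has exponent two.

Suppose now that `m'(s, t)` and `m'(t, u)` are odd in `(W', S')`, and apply the second fact to
`x = s t`, `y = t u`, `r = t`. Retract `W'` onto the parabolic subgroup of the component of `t` in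
the graph of odd edges (`CondTwo.exists_odd_retraction`). All generators in the component agree in
the abelianization, so the image `d` of `c` is trivial or equal to `t` modulo commutators; by the
first fact `d` is `1` or `t`. Hence `s t` or its inverse commutes with `t u`, which a computation in a
reflection representation excludes (`CondTwo.not_commute`).
-/

/-- The standard parabolic subgroup `W_T` of a Coxeter system, generated by the
simple reflections indexed by `T`. -/
def CoxeterSystem.parabolic {B W : Type*} [Group W] {M : CoxeterMatrix B}
    (cs : CoxeterSystem M W) (T : Set B) : Subgroup W :=
  Subgroup.closure (cs.simple '' T)

/-- `T` is a spherical subset: the parabolic subgroup `W_T` is finite. -/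
def CoxeterSystem.IsSpherical {B W : Type*} [Group W] {M : CoxeterMatrix B}
    (cs : CoxeterSystem M W) (T : Set B) : Prop :=
  Finite (cs.parabolic T)

/-- `T` is a maximal spherical subset: spherical and maximal under inclusion
among spherical subsets. -/
def CoxeterSystem.IsMaxSpherical {B W : Type*} [Group W] {M : CoxeterMatrix B}
    (cs : CoxeterSystem M W) (T : Set B) : Prop :=
  cs.IsSpherical T ∧ ∀ U : Set B, cs.IsSpherical U → T ⊆ U → U = T

/-- The conjugate subgroup `g H g⁻¹`. -/
def conjSubgroup {G : Type*} [Group G] (g : G) (H : Subgroup G) : Subgroup G :=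
  Subgroup.map (MulAut.conj g).toMonoidHom H

namespace CondTwo

/-! ### Normal forms in amalgamated products -/

section Amalgam

open Monoid Monoid.PushoutI

variable {ι : Type*} {G : ι → Type*} {H : Type*} [∀ i, Group (G i)] [Group H]
  {φ : ∀ i, H →* G i}

variable (φ) in
/-- A list of syllables is reduced if no syllable lies in the amalgamated subgroup and neighbouring
syllables lie in different factors. -/
def Red (l : List (Σ i, G i)) : Prop :=
  (∀ a ∈ l, a.2 ∉ (φ a.1).range) ∧ l.IsChain (fun a b => a.1 ≠ b.1)

variable (φ) in
/-- The product in the amalgam of a list of syllables. -/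
def prodL (l : List (Σ i, G i)) : PushoutI φ := (l.map (fun a => of (φ := φ) a.1 a.2)).prod

lemma prodL_nil : prodL φ [] = 1 := rfl

lemma prodL_cons (a : Σ i, G i) (l) : prodL φ (a :: l) = of a.1 a.2 * prodL φ l := by
  simp [prodL]

lemma prodL_append (l l' : List (Σ i, G i)) :
    prodL φ (l ++ l') = prodL φ l * prodL φ l' := by
  simp [prodL]

lemma Red.eq_nil (hφ : ∀ i, Function.Injective (φ i)) {l : List (Σ i, G i)} (hl : Red φ l)
    (h : prodL φ l ∈ (base φ).range) : l = [] := by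
  let w : CoprodI.Word G := ⟨l, fun a ha h1 => hl.1 a ha (h1 ▸ one_mem _), hl.2⟩
  have hw : Reduced φ w := hl.1
  have hp : ofCoprodI w.prod = prodL φ l := by
    simp only [CoprodI.Word.prod, prodL, map_list_prod, List.map_map, w]
    rfl
  have := hw.eq_empty_of_mem_range hφ (hp ▸ h)
  exact congrArg CoprodI.Word.toList this

lemma of_mem_base_iff (hφ : ∀ i, Function.Injective (φ i)) {i : ι} (x : G i) :
    of (φ := φ) i x ∈ (base φ).range ↔ x ∈ (φ i).range := by
  constructor
  · rintro ⟨h, hh⟩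
    refine ⟨h, of_injective hφ i ?_⟩
    rw [of_apply_eq_base, hh]
  · rintro ⟨h, rfl⟩
    exact ⟨h, (of_apply_eq_base φ i h).symm⟩

lemma base_mem_of (i : ι) (h : H) : base φ h ∈ (of (φ := φ) i).range :=
  ⟨φ i h, of_apply_eq_base φ i h⟩

lemma Red.tail {a : Σ i, G i} {l} (h : Red φ (a :: l)) : Red φ l :=
  ⟨fun b hb => h.1 b (List.mem_cons_of_mem _ hb), h.2.tail⟩

lemma Red.cons {a : Σ i, G i} {l} (h : Red φ l) (ha : a.2 ∉ (φ a.1).range)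
    (hh : ∀ b ∈ l.head?, a.1 ≠ b.1) : Red φ (a :: l) := by
  refine ⟨?_, List.isChain_cons.2 ⟨hh, h.2⟩⟩
  rintro b (_ | ⟨_, hb⟩)
  · exact ha
  · exact h.1 b hb

/-- Multiplying by an element of a factor preserves the form element of the amalgamated subgroup
times a reduced word. -/
lemma exists_red_cons (i : ι) (g : G i) (h : H) (l : List (Σ i, G i)) (hl : Red φ l) :
    ∃ h' l', Red φ l' ∧ of i g * (base φ h * prodL φ l) = base φ h' * prodL φ l' := by
  classical
  have key : ∀ (x : G i) (l : List (Σ i, G i)), Red φ l → (∀ b ∈ l.head?, i ≠ b.1) →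
      ∃ h' l', Red φ l' ∧ of (φ := φ) i x * prodL φ l = base φ h' * prodL φ l' := by
    intro x l hl hh
    by_cases hx : x ∈ (φ i).range
    · obtain ⟨h', rfl⟩ := hx
      exact ⟨h', l, hl, by rw [of_apply_eq_base]⟩
    · exact ⟨1, ⟨i, x⟩ :: l, hl.cons hx hh, by simp [prodL_cons]⟩
  rw [← of_apply_eq_base φ i h, ← mul_assoc, ← map_mul]
  match l, hl with
  | [], hl => exact key _ [] hl (by simp)
  | ⟨j, y⟩ :: l, hl =>
    by_cases hij : i = j
    · subst hij
      rw [prodL_cons, ← mul_assoc, ← map_mul]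
      exact key _ l hl.tail (fun b hb => (List.isChain_cons.1 hl.2).1 b hb)
    · exact key _ _ hl (by simpa using hij)

lemma exists_red (p : PushoutI φ) : ∃ h l, Red φ l ∧ p = base φ h * prodL φ l := by
  suffices H : ∀ q : PushoutI φ, (∃ h l, Red φ l ∧ q = base φ h * prodL φ l) →
      ∃ h l, Red φ l ∧ p * q = base φ h * prodL φ l by
    simpa using H 1 ⟨1, [], ⟨by simp, List.isChain_nil⟩, by simp [prodL_nil]⟩
  induction p using PushoutI.induction_on with
  | of i g =>
    rintro _ ⟨h, l, hl, rfl⟩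
    exact exists_red_cons i g h l hl
  | base h =>
    rintro _ ⟨h', l, hl, rfl⟩
    exact ⟨h * h', l, hl, by simp [mul_assoc]⟩
  | mul x y hx hy =>
    intro q hq
    rw [mul_assoc]
    exact hx _ (hy q hq)

lemma Red.append {l l' : List (Σ i, G i)} (hl : Red φ l) (hl' : Red φ l')
    (h : ∀ a ∈ l.getLast?, ∀ b ∈ l'.head?, a.1 ≠ b.1) : Red φ (l ++ l') := by
  refine ⟨?_, List.isChain_append.2 ⟨hl.2, hl'.2, h⟩⟩
  intro a ha
  rcases List.mem_append.1 ha with ha | ha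
  · exact hl.1 a ha
  · exact hl'.1 a ha

/-- The formal inverse of a list of syllables. -/
def invL (l : List (Σ i, G i)) : List (Σ i, G i) :=
  (l.map (fun a => (⟨a.1, a.2⁻¹⟩ : Σ i, G i))).reverse

lemma prodL_invL (l : List (Σ i, G i)) : prodL φ (invL l) = (prodL φ l)⁻¹ := by
  induction l with
  | nil => simp [invL, prodL]
  | cons a l ih =>
    have : invL (a :: l) = invL l ++ [⟨a.1, a.2⁻¹⟩] := by simp [invL]
    rw [this, prodL_append, ih, prodL_cons, prodL_cons, prodL_nil]
    simp

lemma Red.invL {l : List (Σ i, G i)} (hl : Red φ l) : Red φ (invL l) := by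
  refine ⟨?_, ?_⟩
  · intro a ha
    simp only [CondTwo.invL, List.mem_reverse, List.mem_map] at ha
    obtain ⟨b, hb, rfl⟩ := ha
    simpa using hl.1 b hb
  · rw [CondTwo.invL, List.isChain_reverse, List.isChain_map]
    exact hl.2.imp (fun a b h => h.symm)

/-- A reduced word conjugates a syllable of a factor other than its last one to a reduced word. -/
lemma Red.conj {l : List (Σ i, G i)} (hl : Red φ l) {i : ι} {x : G i}
    (hx : x ∉ (φ i).range) (h : ∀ a ∈ l.getLast?, a.1 ≠ i) :
    Red φ (l ++ ⟨i, x⟩ :: CondTwo.invL l) := by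
  have hh : ∀ b ∈ (CondTwo.invL l).head?, i ≠ b.1 := by
    intro b hb
    simp only [CondTwo.invL, List.head?_reverse, List.getLast?_map, Option.mem_def,
      Option.map_eq_some_iff] at hb
    obtain ⟨a, ha, rfl⟩ := hb
    exact (h a ha).symm
  refine hl.append (hl.invL.cons hx hh) ?_
  intro a ha b hb
  simp only [List.head?_cons, Option.mem_def, Option.some.injEq] at hb
  subst hb
  exact h a ha

lemma prodL_conj (l : List (Σ i, G i)) (i : ι) (x : G i) :
    prodL φ (l ++ ⟨i, x⟩ :: invL l) = prodL φ l * of i x * (prodL φ l)⁻¹ := by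
  rw [prodL_append, prodL_cons, prodL_invL, mul_assoc]

lemma red_singleton {i : ι} {x : G i} (hx : x ∉ (φ i).range) : Red φ [⟨i, x⟩] :=
  Red.cons ⟨by simp, List.isChain_nil⟩ hx (by simp)

/-- A reduced word with at least two syllables does not represent an element of a factor. -/
lemma Red.notMem_of (hφ : ∀ i, Function.Injective (φ i)) {l : List (Σ i, G i)} (hl : Red φ l)
    (h2 : 2 ≤ l.length) (i : ι) : prodL φ l ∉ (of (φ := φ) i).range := by
  classical
  have key : ∀ l : List (Σ i, G i), Red φ l → l ≠ [] → (∀ a ∈ l.getLast?, a.1 ≠ i) →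
      prodL φ l ∉ (of (φ := φ) i).range := by
    rintro l hl hne hlast ⟨y, hy⟩
    by_cases hyr : y ∈ (φ i).range
    · exact hne (hl.eq_nil hφ (hy ▸ (of_mem_base_iff hφ y).2 hyr))
    · have hr : Red φ (l ++ [⟨i, y⁻¹⟩]) :=
        hl.append (red_singleton (by simpa using hyr)) (by simpa using hlast)
      have := hr.eq_nil hφ (by
        rw [prodL_append, prodL_cons, prodL_nil, ← hy]
        simp)
      simp at this
  rcases List.eq_nil_or_concat l with rfl | ⟨l', ⟨j, x⟩, rfl⟩
  · simp at h2
  have hl' : Red φ l' := ⟨fun a ha => hl.1 a (by simp [ha]), (List.isChain_append.1 (by simpa using hl.2)).1⟩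
  by_cases hj : j = i
  · subst hj
    rintro ⟨y, hy⟩
    refine key l' hl' (by rintro rfl; simp at h2) ?_ ⟨y * x⁻¹, ?_⟩
    · intro a ha
      have := (List.isChain_append.1 (by simpa using hl.2)).2.2 a ha ⟨j, x⟩ (by simp)
      exact this
    · rw [map_mul, hy, List.concat_eq_append, prodL_append, prodL_cons, prodL_nil]
      simp
  · exact key _ hl (by simp) (by simpa using hj)

/-- Malnormality away from the amalgamated subgroup: if an element of a factor that is not
conjugate, inside this factor, into the amalgamated subgroup is conjugated into this factor,
then the conjugating element lies in the factor. -/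
lemma mem_of_of_conj (hφ : ∀ i, Function.Injective (φ i)) {i : ι} {x : G i}
    (hx : ∀ y : G i, y * x * y⁻¹ ∉ (φ i).range) {p : PushoutI φ}
    (hp : p * of i x * p⁻¹ ∈ (of (φ := φ) i).range) : p ∈ (of (φ := φ) i).range := by
  classical
  obtain ⟨h, l, hl, rfl⟩ := exists_red p
  have hb := base_mem_of (φ := φ) i h
  have key : ∀ (l : List (Σ i, G i)) (y : G i), Red φ l → (∀ a ∈ l.getLast?, a.1 ≠ i) →
      prodL φ l * of (φ := φ) i (y * x * y⁻¹) * (prodL φ l)⁻¹ ∈ (of (φ := φ) i).range → l = [] := by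
    intro l y hl hlast hm
    by_contra hne
    rw [← prodL_conj] at hm
    refine (hl.conj (hx y) hlast).notMem_of hφ ?_ i hm
    have := List.length_pos_iff.2 hne
    simp
    omega
  have hp' : prodL φ l * of i x * (prodL φ l)⁻¹ ∈ (of (φ := φ) i).range := by
    have := mul_mem (mul_mem (inv_mem hb) hp) hb
    convert this using 1
    group
  refine mul_mem hb ?_
  rcases List.eq_nil_or_concat l with rfl | ⟨l', ⟨j, y⟩, rfl⟩
  · exact one_mem _
  rw [List.concat_eq_append] at *
  by_cases hj : j = i
  · subst hj
    have hl' : Red φ l' :=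
      ⟨fun a ha => hl.1 a (by simp [ha]), (List.isChain_append.1 hl.2).1⟩
    have := key l' y hl' (fun a ha => (List.isChain_append.1 hl.2).2.2 a ha ⟨j, y⟩ (by simp)) (by
      convert hp' using 1
      rw [prodL_append, prodL_cons, prodL_nil]
      simp only [map_mul, map_inv]
      group)
    subst this
    exact ⟨y, by simp [prodL]⟩
  · have := key _ 1 hl (by simpa using hj) (by simpa using hp')
    simp at this

/-- Centralisers of elements of the amalgamated subgroup: suppose that in every factor but the
`i`-th, a nontrivial element of the amalgamated subgroup is conjugated back into this subgroup only
by its own elements. Then elements of the amalgam conjugating a nontrivial element of the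
amalgamated subgroup back into it lie in the `i`-th factor. -/
lemma mem_of_of_conj_base (hφ : ∀ i, Function.Injective (φ i)) (i : ι)
    (hj : ∀ j ≠ i, ∀ (y : G j) (c : H), c ≠ 1 → y * φ j c * y⁻¹ ∈ (φ j).range → y ∈ (φ j).range)
    {c : H} (hc : c ≠ 1) {p : PushoutI φ} (hp : p * base φ c * p⁻¹ ∈ (base φ).range) :
    p ∈ (of (φ := φ) i).range := by
  classical
  obtain ⟨h, l, hl, rfl⟩ := exists_red p
  have hb : base φ h ∈ (base φ).range := ⟨h, rfl⟩
  have hp' : prodL φ l * base φ c * (prodL φ l)⁻¹ ∈ (base φ).range := by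
    have := mul_mem (mul_mem (inv_mem hb) hp) hb
    convert this using 1
    group
  refine mul_mem (base_mem_of i h) ?_
  -- If a conjugate of `c` by the last syllable leaves the amalgamated subgroup, the conjugate by
  -- the whole word is represented by a nonempty reduced word.
  have key : ∀ (l : List (Σ i, G i)) (j : ι) (y : G j) (c : H), Red φ (l ++ [⟨j, y⟩]) →
      prodL φ (l ++ [⟨j, y⟩]) * base φ c * (prodL φ (l ++ [⟨j, y⟩]))⁻¹ ∈ (base φ).range →
      y * φ j c * y⁻¹ ∈ (φ j).range := by
    intro l j y c hl hm
    by_contra hx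
    have hl' : Red φ l := ⟨fun a ha => hl.1 a (by simp [ha]), (List.isChain_append.1 hl.2).1⟩
    have := (hl'.conj hx
      (fun a ha => (List.isChain_append.1 hl.2).2.2 a ha ⟨j, y⟩ (by simp))).eq_nil hφ (by
        convert hm using 1
        rw [prodL_conj, prodL_append, prodL_cons, prodL_nil, ← of_apply_eq_base φ j c]
        simp only [map_mul, map_inv]
        group)
    simp at this
  rcases List.eq_nil_or_concat l with rfl | ⟨l', ⟨j, y⟩, rfl⟩
  · exact one_mem _
  rw [List.concat_eq_append] at *
  have h1 := key _ _ _ _ hl hp'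
  by_cases hji : j = i
  · subst hji
    obtain ⟨c', hc'⟩ := h1
    have hc'1 : c' ≠ 1 := by
      rintro rfl
      rw [map_one, eq_comm, conj_eq_one_iff] at hc'
      exact hc (hφ j (by simpa using hc'))
    have hl' : Red φ l' := ⟨fun a ha => hl.1 a (by simp [ha]), (List.isChain_append.1 hl.2).1⟩
    rcases List.eq_nil_or_concat l' with rfl | ⟨l'', ⟨k, z⟩, rfl⟩
    · exact ⟨y, by simp [prodL]⟩
    rw [List.concat_eq_append] at *
    have hkj : k ≠ j := (List.isChain_append.1 hl.2).2.2 ⟨k, z⟩ (by simp) ⟨j, y⟩ (by simp)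
    have h2 := key _ _ _ c' hl' (by
      convert hp' using 1
      rw [prodL_append (_ ++ _), prodL_cons, prodL_nil, ← of_apply_eq_base φ j c',
        ← of_apply_eq_base φ j c, hc']
      simp only [map_mul, map_inv]
      group)
    exact absurd (hj k hkj z c' hc'1 h2) (hl'.1 ⟨k, z⟩ (by simp))
  · exact absurd (hj j hji y c hc h1) (hl.1 ⟨j, y⟩ (by simp))

/-- Elements of finite order in an amalgam are conjugate into a factor: a shortest word in the
conjugacy class is cyclically reduced, hence has at most one syllable, as powers of a longer one
remain reduced. -/
lemma exists_conj_mem_of [Nonempty ι] (hφ : ∀ i, Function.Injective (φ i)) {p : PushoutI φ}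
    (hp : IsOfFinOrder p) : ∃ (q : PushoutI φ) (i : ι), q * p * q⁻¹ ∈ (of (φ := φ) i).range := by
  classical
  have hex : ∃ n : ℕ, ∃ (q : PushoutI φ) (h : H) (l : List (Σ i, G i)), Red φ l ∧
      q * p * q⁻¹ = base φ h * prodL φ l ∧ l.length = n := by
    obtain ⟨h, l, hl, e⟩ := exists_red p
    exact ⟨_, 1, h, l, hl, by simpa using e, rfl⟩
  obtain ⟨q, h, l, hl, e, hlen⟩ := Nat.find_spec hex
  have hmin : ∀ (q : PushoutI φ) (h : H) (l : List (Σ i, G i)), Red φ l →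
      q * p * q⁻¹ = base φ h * prodL φ l → Nat.find hex ≤ l.length :=
    fun q h l hl e => Nat.find_min' hex ⟨q, h, l, hl, e, rfl⟩
  match l, hl, e, hlen with
  | [], hl, e, _ =>
    obtain ⟨i⟩ := ‹Nonempty ι›
    exact ⟨q, i, by rw [e, prodL_nil, mul_one]; exact base_mem_of i h⟩
  | [⟨i, x⟩], hl, e, _ =>
    refine ⟨q, i, ?_⟩
    rw [e, prodL_cons, prodL_nil, mul_one]
    exact mul_mem (base_mem_of i h) ⟨x, rfl⟩
  | ⟨i, x⟩ :: b :: l, hl, e, hlen =>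
    exfalso
    obtain ⟨l', ⟨j, y⟩, hl'⟩ := (List.eq_nil_or_concat (b :: l)).resolve_left (by simp)
    rw [List.concat_eq_append] at hl'
    rw [hl'] at hl e hlen
    -- absorb the element of the amalgamated subgroup into the first syllable
    have hx' : φ i h * x ∉ (φ i).range := by
      intro hm
      exact hl.1 ⟨i, x⟩ (by simp) ((Subgroup.mul_mem_cancel_left _ (MonoidHom.mem_range.2 ⟨h, rfl⟩)).1 hm)
    have hr : Red φ (⟨i, φ i h * x⟩ :: (l' ++ [⟨j, y⟩])) :=
      hl.tail.cons hx' (fun c hc => (List.isChain_cons.1 hl.2).1 c hc)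
    have e' : q * p * q⁻¹ = prodL φ (⟨i, φ i h * x⟩ :: (l' ++ [⟨j, y⟩])) := by
      rw [e, prodL_cons, prodL_cons, map_mul, of_apply_eq_base, mul_assoc]
    generalize φ i h * x = x' at hr e' hx'
    by_cases hij : j = i
    · subst hij
      -- conjugating by the last syllable shortens the word
      have e2 : (of j y * q) * p * (of j y * q)⁻¹ = of j (y * x') * (base φ 1 * prodL φ l') := by
        calc _ = of j y * (q * p * q⁻¹) * (of j y)⁻¹ := by group
          _ = _ := by
            rw [e', prodL_cons, prodL_append, prodL_cons, prodL_nil]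
            simp [mul_assoc]
      have hl'r : Red φ l' := ⟨fun a ha => hl.1 a (by simp [ha]),
        (List.isChain_append.1 hl.tail.2).1⟩
      by_cases hm : y * x' ∈ (φ j).range
      · obtain ⟨h', hh'⟩ := hm
        rw [← hh', of_apply_eq_base, map_one, one_mul] at e2
        have := hmin _ _ _ hl'r e2
        rw [← hlen] at this
        simp at this
      · have hr2 : Red φ (⟨j, y * x'⟩ :: l') := by
          refine hl'r.cons hm ?_
          intro b hb
          refine (List.isChain_cons.1 hr.2).1 b ?_
          cases l' with
          | nil => simp at hb
          | cons => simpa using hb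
        have := hmin _ 1 _ hr2 (by rw [e2, prodL_cons]; simp)
        rw [← hlen] at this
        simp at this
    · -- all powers are reduced
      obtain ⟨n, hn, hpn⟩ := isOfFinOrder_iff_pow_eq_one.1 hp
      have hpow : ∀ n : ℕ, ∃ l'' : List (Σ i, G i), Red φ (⟨i, x'⟩ :: (l'' ++ [⟨j, y⟩])) ∧
          (q * p * q⁻¹) ^ (n + 1) = prodL φ (⟨i, x'⟩ :: (l'' ++ [⟨j, y⟩])) := by
        intro n
        induction n with
        | zero => exact ⟨l', hr, by simpa using e'⟩
        | succ n ih =>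
          obtain ⟨l'', hl'', e''⟩ := ih
          refine ⟨l' ++ [⟨j, y⟩] ++ ⟨i, x'⟩ :: l'', ?_, ?_⟩
          · have := hr.append hl'' (by
              intro a ha b hb
              have ha' : a = ⟨j, y⟩ := by
                rw [← List.cons_append, List.getLast?_append] at ha
                simpa [eq_comm] using ha
              have hb' : b = ⟨i, x'⟩ := by simpa [eq_comm] using hb
              subst ha' hb'
              exact hij)
            simpa using this
          · rw [pow_succ', e'', e', ← prodL_append]
            simp
      obtain ⟨l'', hl'', e''⟩ := hpow (n - 1)
      have := hl''.eq_nil hφ (by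
        rw [← e'', Nat.sub_add_cancel hn, conj_pow, hpn]
        simp)
      simp at this

end Amalgam

/-! ### Splittings of Coxeter groups as amalgams -/

section Internal

open Monoid Monoid.PushoutI

variable {W : Type*} [Group W] {A : Bool → Subgroup W} {C : Subgroup W}

/-- The inclusions of a subgroup `C` into two subgroups containing it; their pushout is the
candidate amalgam decomposition of the subgroup generated by the two. -/
def incl (hC : ∀ i, C ≤ A i) : ∀ i, C →* A i := fun i => Subgroup.inclusion (hC i)

lemma incl_injective (hC : ∀ i, C ≤ A i) (i : Bool) : Function.Injective (incl hC i) :=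
  Subgroup.inclusion_injective _

lemma subtype_comp_incl (hC : ∀ i, C ≤ A i) (i : Bool) :
    (A i).subtype.comp (incl hC i) = C.subtype := rfl

/-- The canonical map from the abstract amalgam of two subgroups to the ambient group. -/
def fold (hC : ∀ i, C ≤ A i) : PushoutI (incl hC) →* W :=
  PushoutI.lift (fun i => (A i).subtype) C.subtype (subtype_comp_incl hC)

lemma fold_of (hC : ∀ i, C ≤ A i) (i : Bool) (a : A i) : fold hC (of i a) = a := by
  rw [fold, PushoutI.lift_of]; rfl

variable {hC : ∀ i, C ≤ A i} {F : W →* PushoutI (incl hC)}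

lemma fold_apply (hF : ∀ i (a : A i), F a = of i a) {g : W} (hg : g ∈ ⨆ i, A i) :
    fold hC (F g) = g := by
  have : ⨆ i, A i ≤ ((fold hC).comp F).eqLocus (MonoidHom.id W) := by
    refine iSup_le fun i a ha => ?_
    have := hF i ⟨a, ha⟩
    simp only at this
    change fold hC (F a) = a
    rw [this, fold_of]
  exact this hg

/-- Torsion in a subgroup that splits as an amalgam. -/
lemma torsion_conj (hF : ∀ i (a : A i), F a = of i a) {g : W} (hg : g ∈ ⨆ i, A i)
    (hfin : IsOfFinOrder g) : ∃ (h : W) (i : Bool), h * g * h⁻¹ ∈ A i := by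
  obtain ⟨q, i, a, ha⟩ := exists_conj_mem_of (incl_injective hC) (F.isOfFinOrder hfin)
  refine ⟨fold hC q, i, ?_⟩
  have := congrArg (fold hC) ha
  rw [fold_of, map_mul, map_mul, map_inv, fold_apply hF hg] at this
  rw [← this]
  exact a.2

lemma mem_of_map_mem (hF : ∀ i (a : A i), F a = of i a) {g : W} (hg : g ∈ ⨆ i, A i) {i : Bool}
    (h : F g ∈ (of (φ := incl hC) i).range) : g ∈ A i := by
  obtain ⟨a, ha⟩ := h
  rw [← fold_apply hF hg, ← ha, fold_of]
  exact a.2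

/-- Malnormality in a subgroup that splits as an amalgam. -/
lemma mem_of_conj_mem (hF : ∀ i (a : A i), F a = of i a) {i : Bool} {x g : W} (hx : x ∈ A i)
    (hxC : ∀ y ∈ A i, y * x * y⁻¹ ∉ C) (hg : g ∈ ⨆ i, A i) (hgx : g * x * g⁻¹ ∈ A i) :
    g ∈ A i := by
  refine mem_of_map_mem hF hg (mem_of_of_conj (incl_injective hC) (x := ⟨x, hx⟩) ?_ ?_)
  · rintro ⟨y, hy⟩ ⟨c, hc⟩
    refine hxC y hy ?_
    have := congrArg (Subtype.val) hc
    simp only [incl, Subgroup.coe_inclusion] at this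
    have h2 : y * x * y⁻¹ = c := this.symm
    rw [h2]
    exact c.2
  · refine ⟨⟨_, hgx⟩, ?_⟩
    rw [← hF, ← hF, map_mul, map_mul, map_inv]

/-- Centralisers in a subgroup that splits as an amalgam. -/
lemma mem_of_commute (hF : ∀ i (a : A i), F a = of i a) {i : Bool} {c g : W} (hc : c ∈ C)
    (hc1 : c ≠ 1)
    (hj : ∀ j ≠ i, ∀ y ∈ A j, ∀ c ∈ C, c ≠ 1 → y * c * y⁻¹ ∈ C → y ∈ C)
    (hg : g ∈ ⨆ i, A i) (hgc : g * c * g⁻¹ = c) : g ∈ A i := by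
  have hFc : F c = base (incl hC) ⟨c, hc⟩ := by
    rw [← of_apply_eq_base (incl hC) i]
    exact hF i ⟨c, hC i hc⟩
  refine mem_of_map_mem hF hg (mem_of_of_conj_base (incl_injective hC) i ?_
    (c := ⟨c, hc⟩) (by simpa [Subtype.ext_iff] using hc1) ?_)
  · rintro j hji ⟨y, hy⟩ ⟨c, hc⟩ hc1 ⟨⟨d, hd⟩, hdd⟩
    have h2 : d = y * c * y⁻¹ := congrArg (Subtype.val) hdd
    have := hj j hji y hy c hc (by simpa [Subtype.ext_iff] using hc1) (h2 ▸ hd)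
    exact ⟨⟨y, this⟩, rfl⟩
  · refine ⟨⟨c, hc⟩, ?_⟩
    rw [← hFc, ← map_inv, ← map_mul, ← map_mul, hgc]

end Internal

section Cox

variable {B W : Type*} [Group W] {M : CoxeterMatrix B} (cs : CoxeterSystem M W)

/-- The order of the product of two simple reflections. -/
noncomputable abbrev ord (b c : B) : ℕ := orderOf (cs.simple b * cs.simple c)

lemma ord_comm (b c : B) : ord cs b c = ord cs c b := by
  rw [ord, ← orderOf_inv]; simp [ord]

lemma ord_self (b : B) : ord cs b b = 1 := by simp [ord]

lemma ord_dvd (b c : B) : ord cs b c ∣ M b c :=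
  orderOf_dvd_of_pow_eq_one (cs.simple_mul_simple_pow b c)

/-- To define a homomorphism on a Coxeter group it suffices to respect the relations given by the
actual orders of the products of simple reflections. -/
lemma exists_hom {G : Type*} [Group G] (f : B → G)
    (hf : ∀ b c, (f b * f c) ^ ord cs b c = 1) : ∃ F : W →* G, ∀ b, F (cs.simple b) = f b := by
  have hl : M.IsLiftable f := fun b c => by
    obtain ⟨k, hk⟩ := ord_dvd cs b c
    rw [hk, pow_mul, hf, one_pow]
  exact ⟨cs.lift ⟨f, hl⟩, fun b => cs.lift_apply_simple hl b⟩

/-- The combinatorial shape of the Coxeter systems under consideration. Every odd edge has a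
*pendant* endpoint `t` whose only neighbour is the other endpoint `σ t`, the *base*; `σ` fixes all
other generators. Besides `t`, the neighbours of a base commute pairwise, and every finite even
label is `2`. -/
structure Shape (σ : B → B) : Prop where
  even : ∀ b c, ord cs b c ≠ 0 → Even (ord cs b c) → ord cs b c = 2
  odd : ∀ b c, b ≠ c → Odd (ord cs b c) → σ b = c ∨ σ c = b
  odd_pend : ∀ t, σ t ≠ t → Odd (ord cs t (σ t))
  isol : ∀ t u, σ t ≠ t → u ≠ t → u ≠ σ t → ord cs t u = 0
  idem : ∀ b, σ (σ b) = σ b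
  uniq : ∀ t u, σ t ≠ t → σ u ≠ u → σ t = σ u → t = u
  link : ∀ t u v, σ t ≠ t → u ≠ t → u ≠ σ t → v ≠ t → v ≠ σ t → u ≠ v →
    ord cs (σ t) u ≠ 0 → ord cs (σ t) v ≠ 0 → ord cs u v = 2

variable {cs} {σ : B → B}

/-- If `U` contains the bases of its pendants, then every map on `U` respecting the relations among
`U` extends to a homomorphism on `W`: pendants outside `U` are sent where their bases go. -/
lemma exists_hom_on (hσ : Shape cs σ) {G : Type*} [Group G] {U : Set B}
    (hU : ∀ b ∈ U, σ b ∈ U) (f : B → G)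
    (hf : ∀ b ∈ U, ∀ c ∈ U, (f b * f c) ^ ord cs b c = 1) :
    ∃ F : W →* G, ∀ b ∈ U, F (cs.simple b) = f b := by
  classical
  let f' : B → G := fun b => if b ∈ U then f b else if σ b ∈ U then f (σ b) else 1
  have hsq : ∀ b ∈ U, f b * f b = 1 := fun b hb => by
    have := hf b hb b hb
    rwa [ord_self, pow_one] at this
  have hsq' : ∀ b, f' b * f' b = 1 := fun b => by
    simp only [f']
    split_ifs with h1 h2
    · exact hsq b h1
    · exact hsq _ h2
    · simp
  -- a pendant and its base have equal images unless both lie in `U`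
  have hσU : ∀ b, ¬(b ∈ U ∧ σ b ∈ U) → f' b = f' (σ b) := fun b hb => by
    have hbU : b ∉ U := fun h => hb ⟨h, hU b h⟩
    simp only [f', hbU, if_false, hσ.idem]
    split_ifs <;> rfl
  have hone : ∀ b c, b ∉ U → ord cs b c = 2 → f' b = 1 := fun b c hb hbc => by
    have hcb : c ≠ b := by rintro rfl; rw [ord_self] at hbc; omega
    simp only [f', hb, if_false]
    split_ifs with h
    · have hσb : σ b ≠ b := fun e => hb (e ▸ h)
      by_cases hc : c = σ b
      · have := hσ.odd_pend b hσb
        rw [← hc, hbc] at this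
        exact absurd this (by decide)
      · have := hσ.isol b c hσb hcb hc
        omega
    · rfl
  have hf' : ∀ b c, (f' b * f' c) ^ ord cs b c = 1 := by
    intro b c
    by_cases hbc : b ∈ U ∧ c ∈ U
    · simpa only [f', hbc.1, hbc.2, if_true] using hf b hbc.1 c hbc.2
    by_cases h0 : ord cs b c = 0
    · rw [h0, pow_zero]
    rcases Nat.even_or_odd (ord cs b c) with he | ho
    · have h2 := hσ.even b c h0 he
      rw [h2]
      by_cases hb : b ∈ U
      · rw [hone c b (fun hc => hbc ⟨hb, hc⟩) (by rw [ord_comm, h2]), mul_one, sq, hsq']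
      · rw [hone b c hb h2, one_mul, sq, hsq']
    · have : f' b * f' c = 1 := by
        by_cases hb : b = c
        · rw [← hb, hsq']
        rcases hσ.odd b c hb ho with e | e
        · rw [hσU b (by rwa [e]), e, hsq']
        · rw [hσU c (by rwa [e, and_comm]), e, hsq']
      rw [this, one_pow]
  obtain ⟨F, hF⟩ := exists_hom cs f' hf'
  exact ⟨F, fun b hb => by rw [hF]; simp [f', hb]⟩

open Classical in
/-- A character of `W`: the generators with base `a` go to `-1`, the others to `1`. -/
lemma exists_sign (hσ : Shape cs σ) (a : B) :
    ∃ ε : W →* ℤˣ, ∀ b, ε (cs.simple b) = if σ b = a then -1 else 1 := by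
  classical
  refine exists_hom cs _ ?_
  intro b c
  by_cases h0 : ord cs b c = 0
  · rw [h0, pow_zero]
  rcases Nat.even_or_odd (ord cs b c) with he | ho
  · rw [hσ.even b c h0 he]
    exact Int.units_sq _
  · have : σ b = σ c := by
      by_cases hb : b = c
      · rw [hb]
      rcases hσ.odd b c hb ho with e | e
      · rw [← e, hσ.idem]
      · rw [← e, hσ.idem]
    rw [this, Int.units_mul_self, one_pow]

lemma simple_mem {T : Set B} {b : B} (hb : b ∈ T) : cs.simple b ∈ cs.parabolic T :=
  Subgroup.subset_closure ⟨b, hb, rfl⟩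

lemma parabolic_mono {T T' : Set B} (h : T ⊆ T') : cs.parabolic T ≤ cs.parabolic T' :=
  Subgroup.closure_mono (Set.image_mono h)

lemma parabolic_univ : cs.parabolic Set.univ = ⊤ := by
  rw [CoxeterSystem.parabolic, Set.image_univ, cs.subgroup_closure_range_simple]

/-- The parabolics attached to a pair of subsets, indexed by `Bool`. -/
abbrev pair (cs : CoxeterSystem M W) (X Y : Set B) : Bool → Subgroup W :=
  fun i => cs.parabolic (cond i X Y)

lemma inter_le_pair (X Y : Set B) (i : Bool) : cs.parabolic (X ∩ Y) ≤ pair cs X Y i := by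
  cases i
  · exact parabolic_mono Set.inter_subset_right
  · exact parabolic_mono Set.inter_subset_left

lemma mem_iSup_pair {X Y : Set B} {g : W} (hg : g ∈ cs.parabolic (X ∪ Y)) :
    g ∈ ⨆ i, pair cs X Y i := by
  have : cs.parabolic (X ∪ Y) ≤ ⨆ i, pair cs X Y i := by
    refine (Subgroup.closure_le _).2 ?_
    rintro _ ⟨b, hb | hb, rfl⟩
    · exact Subgroup.mem_iSup_of_mem true (simple_mem hb)
    · exact Subgroup.mem_iSup_of_mem false (simple_mem hb)
  exact this hg

open Monoid Monoid.PushoutI in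
/-- If no finite label joins `X \ Y` to `Y \ X`, then `W_{X ∪ Y}` is the amalgam of `W_X` and `W_Y`
over `W_{X ∩ Y}`; this is the homomorphism to the abstract amalgam. -/
lemma exists_splitting (hσ : Shape cs σ) {X Y : Set B} (hU : ∀ b ∈ X ∪ Y, σ b ∈ X ∪ Y)
    (hXY : ∀ b ∈ X, b ∉ Y → ∀ c ∈ Y, c ∉ X → ord cs b c = 0) :
    ∃ F : W →* PushoutI (incl (inter_le_pair (cs := cs) X Y)),
      ∀ i (a : pair cs X Y i), F a = of i a := by
  classical
  let f : B → PushoutI (incl (inter_le_pair (cs := cs) X Y)) := fun b =>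
    if hb : b ∈ X then of true (⟨cs.simple b, simple_mem hb⟩ : pair cs X Y true)
    else if hb : b ∈ Y then of false (⟨cs.simple b, simple_mem hb⟩ : pair cs X Y false)
    else 1
  have hfX : ∀ b (hb : b ∈ X), f b = of true (⟨cs.simple b, simple_mem hb⟩ : pair cs X Y true) :=
    fun b hb => by simp [f, hb]
  have hfY : ∀ b (hb : b ∈ Y), f b = of false (⟨cs.simple b, simple_mem hb⟩ : pair cs X Y false) := by
    intro b hb
    by_cases hbX : b ∈ X
    · rw [hfX b hbX]
      have h1 := of_apply_eq_base (incl (inter_le_pair (cs := cs) X Y)) true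
        ⟨cs.simple b, simple_mem ⟨hbX, hb⟩⟩
      have h2 := of_apply_eq_base (incl (inter_le_pair (cs := cs) X Y)) false
        ⟨cs.simple b, simple_mem ⟨hbX, hb⟩⟩
      exact h1.trans h2.symm
    · simp [f, hb, hbX]
  have hf : ∀ b ∈ X ∪ Y, ∀ c ∈ X ∪ Y, (f b * f c) ^ ord cs b c = 1 := by
    have key : ∀ (i : Bool) b c (hb : b ∈ cond i X Y) (hc : c ∈ cond i X Y),
        (of (φ := incl (inter_le_pair (cs := cs) X Y)) i
          (⟨cs.simple b, simple_mem hb⟩ : pair cs X Y i) *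
        of i (⟨cs.simple c, simple_mem hc⟩ : pair cs X Y i)) ^ ord cs b c = 1 := by
      intro i b c hb hc
      have h1 : ((⟨cs.simple b, simple_mem hb⟩ : pair cs X Y i) *
          ⟨cs.simple c, simple_mem hc⟩) ^ ord cs b c = 1 := Subtype.ext (pow_orderOf_eq_one _)
      rw [← map_mul, ← map_pow, h1]
      exact map_one _
    intro b hb c hc
    by_cases h1 : b ∈ X ∧ c ∈ X
    · rw [hfX b h1.1, hfX c h1.2]
      exact key true b c h1.1 h1.2
    by_cases h2 : b ∈ Y ∧ c ∈ Y
    · rw [hfY b h2.1, hfY c h2.2]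
      exact key false b c h2.1 h2.2
    have : ord cs b c = 0 := by
      rcases hb with hb | hb
      · have hcX : c ∉ X := fun h => h1 ⟨hb, h⟩
        have hcY := hc.resolve_left hcX
        exact hXY b hb (fun h => h2 ⟨h, hcY⟩) c hcY hcX
      · have hcY : c ∉ Y := fun h => h2 ⟨hb, h⟩
        have hcX := hc.resolve_right hcY
        rw [ord_comm]
        exact hXY c hcX hcY b hb (fun h => h1 ⟨h, hcX⟩)
    rw [this, pow_zero]
  obtain ⟨F, hF⟩ := exists_hom_on hσ hU f hf
  refine ⟨F, ?_⟩
  rintro i ⟨a, ha⟩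
  have : ∀ a (ha : a ∈ Subgroup.closure (cs.simple '' (cond i X Y))),
      F a = of i (⟨a, ha⟩ : pair cs X Y i) := by
    intro a ha
    induction ha using Subgroup.closure_induction with
    | mem x hx =>
      obtain ⟨b, hb, rfl⟩ := hx
      cases i
      · exact (hF b (Or.inr hb)).trans (hfY b hb)
      · exact (hF b (Or.inl hb)).trans (hfX b hb)
    | one => rw [map_one]; exact (map_one _).symm
    | mul x y hx hy ihx ihy =>
      rw [map_mul, ihx, ihy]; exact (map_mul _ _ _).symm
    | inv x hx ih => rw [map_inv, ih]; exact (map_inv _ _).symm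
  exact this a ha

end Cox

/-! ### Torsion, commutators and centralisers -/

section Torsion

lemma mul_zpow_of_sq {W : Type*} [Group W] {a b : W} (ha : a * a = 1) (hb : b * b = 1) (k : ℤ) :
    a * (a * b) ^ k = (a * b) ^ (-k) * a := by
  have ha' : a⁻¹ = a := inv_eq_of_mul_eq_one_left ha
  have hb' : b⁻¹ = b := inv_eq_of_mul_eq_one_left hb
  have h : a * (a * b) * a⁻¹ = (a * b)⁻¹ := by
    rw [mul_inv_rev, hb', ha', ← mul_assoc, ha, one_mul]
  have := conj_zpow (a := a) (b := a * b) (i := k)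
  rw [h, inv_zpow'] at this
  rw [this]
  simp

/-- Two involutions generate a dihedral group: each element is a rotation or a reflection. -/
lemma dihedral_elem {W : Type*} [Group W] {a b g : W} (ha : a * a = 1) (hb : b * b = 1)
    (hg : g ∈ Subgroup.closure {a, b}) : ∃ k : ℤ, g = (a * b) ^ k ∨ g = (a * b) ^ k * a := by
  have ha' : a⁻¹ = a := inv_eq_of_mul_eq_one_left ha
  have hab := mul_zpow_of_sq ha hb
  induction hg using Subgroup.closure_induction with
  | mem x hx =>
    rcases hx with rfl | rfl
    · exact ⟨0, Or.inr (by simp)⟩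
    · refine ⟨-1, Or.inr ?_⟩
      rw [← hab, zpow_one, ← mul_assoc, ha, one_mul]
  | one => exact ⟨0, Or.inl (by simp)⟩
  | mul x y hx hy ihx ihy =>
    obtain ⟨k, rfl | rfl⟩ := ihx <;> obtain ⟨l, rfl | rfl⟩ := ihy
    · exact ⟨k + l, Or.inl (by rw [zpow_add])⟩
    · exact ⟨k + l, Or.inr (by rw [zpow_add, mul_assoc])⟩
    · exact ⟨k + -l, Or.inr (by rw [mul_assoc, hab, zpow_add, mul_assoc])⟩
    · refine ⟨k + -l, Or.inl ?_⟩
      rw [mul_assoc, ← mul_assoc a, hab, zpow_add, mul_assoc _ a a, ha, mul_one]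
  | inv x hx ih =>
    obtain ⟨k, rfl | rfl⟩ := ih
    · exact ⟨-k, Or.inl (by rw [zpow_neg])⟩
    · exact ⟨k, Or.inr (by rw [mul_inv_rev, ha', ← zpow_neg, hab, neg_neg])⟩

lemma eq_one_of_sq_of_odd {W : Type*} [Group W] {x : W} (h2 : x * x = 1) {n : ℕ} (hn : Odd n)
    (h : x ^ n = 1) : x = 1 := by
  obtain ⟨k, rfl⟩ := hn
  rwa [pow_add, pow_mul, sq, h2, one_pow, one_mul, pow_one] at h

variable {B W : Type*} [Group W] {M : CoxeterMatrix B} {cs : CoxeterSystem M W} {σ : B → B}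

/-- A finite order element of `W` is conjugate into a parabolic subgroup without infinite labels:
as long as there is an infinite label, the parabolic splits as an amalgam of smaller ones. -/
lemma torsion_clique [Finite B] (hσ : Shape cs σ) {g : W} (hfin : IsOfFinOrder g) :
    ∃ (h : W) (T : Set B), (∀ b ∈ T, ∀ c ∈ T, ord cs b c ≠ 0) ∧ h * g * h⁻¹ ∈ cs.parabolic T := by
  suffices H : ∀ (n : ℕ) (U : Set B), U.ncard = n → (∀ b ∈ U, σ b ∈ U) → ∀ g ∈ cs.parabolic U,
      IsOfFinOrder g → ∃ (h : W) (T : Set B),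
        (∀ b ∈ T, ∀ c ∈ T, ord cs b c ≠ 0) ∧ h * g * h⁻¹ ∈ cs.parabolic T from
    H _ Set.univ rfl (by simp) g (by rw [parabolic_univ]; trivial) hfin
  intro n
  induction n using Nat.strong_induction_on with
  | _ n ih =>
  intro U hn hU g hg hfin
  -- reduction to the two smaller parabolics of a splitting
  have step : ∀ X Y : Set B, X ∪ Y = U →
      (∀ b ∈ X, b ∉ Y → ∀ c ∈ Y, c ∉ X → ord cs b c = 0) →
      (∀ i : Bool, (∀ b ∈ cond i X Y, ∀ c ∈ cond i X Y, ord cs b c ≠ 0) ∨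
        ((∀ b ∈ cond i X Y, σ b ∈ cond i X Y) ∧ cond i X Y ⊂ U)) →
      ∃ (h : W) (T : Set B),
        (∀ b ∈ T, ∀ c ∈ T, ord cs b c ≠ 0) ∧ h * g * h⁻¹ ∈ cs.parabolic T := by
    intro X Y hXY h0 hi
    subst hXY
    obtain ⟨F, hF⟩ := exists_splitting hσ hU h0
    obtain ⟨h, i, hh⟩ := torsion_conj hF (mem_iSup_pair hg) hfin
    rcases hi i with hi | ⟨hi, hlt⟩
    · exact ⟨h, _, hi, hh⟩
    · obtain ⟨h', T, hT, hh'⟩ := ih _ (hn ▸ Set.ncard_lt_ncard hlt) _ rfl hi _ hh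
        ((MulAut.conj h).toMonoidHom.isOfFinOrder hfin)
      refine ⟨h' * h, T, hT, ?_⟩
      convert hh' using 1
      group
  by_cases hp : ∃ t ∈ U, σ t ≠ t
  · obtain ⟨t, ht, hst⟩ := hp
    refine step {σ t, t} (U \ {t}) ?_ ?_ ?_
    · ext b
      simp only [Set.mem_union, Set.mem_insert_iff, Set.mem_singleton_iff, Set.mem_sdiff]
      constructor
      · rintro ((rfl | rfl) | h)
        exacts [hU t ht, ht, h.1]
      · intro hb
        by_cases hbt : b = t
        · exact Or.inl (Or.inr hbt)
        · exact Or.inr ⟨hb, hbt⟩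
    · rintro b (rfl | rfl) hb c hc hc'
      · exact absurd ⟨hU t ht, hst⟩ hb
      · simp only [Set.mem_insert_iff, Set.mem_singleton_iff, not_or] at hc'
        exact hσ.isol b c hst hc'.2 hc'.1
    · rintro (_ | _)
      · refine Or.inr ⟨?_, ?_⟩
        · rintro b ⟨hb, hbt⟩
          refine ⟨hU b hb, ?_⟩
          rintro (e : σ b = t)
          exact hst (e ▸ hσ.idem b)
        · exact ⟨Set.sdiff_subset, fun h => (h ht).2 rfl⟩
      · left
        have h1 : ord cs t (σ t) ≠ 0 := (hσ.odd_pend t hst).pos.ne'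
        rintro b (rfl | rfl) c (rfl | rfl)
        · rw [ord_self]; exact one_ne_zero
        · rw [ord_comm]; exact h1
        · exact h1
        · rw [ord_self]; exact one_ne_zero
  · push Not at hp
    by_cases hc : ∀ b ∈ U, ∀ c ∈ U, ord cs b c ≠ 0
    · exact ⟨1, U, hc, by simpa using hg⟩
    push Not at hc
    obtain ⟨u, hu, v, hv, huv⟩ := hc
    have hne : u ≠ v := by rintro rfl; rw [ord_self] at huv; omega
    refine step (U \ {v}) (U \ {u}) ?_ ?_ ?_
    · ext b
      simp only [Set.mem_union, Set.mem_singleton_iff, Set.mem_sdiff]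
      constructor
      · rintro (h | h) <;> exact h.1
      · intro hb
        by_cases hbv : b = v
        · exact Or.inr ⟨hb, fun h => hne (h ▸ hbv)⟩
        · exact Or.inl ⟨hb, hbv⟩
    · rintro b ⟨hb, hbv⟩ hb' c ⟨hc, hcu⟩ hc'
      have h1 : b = u := by by_contra h; exact hb' ⟨hb, h⟩
      have h2 : c = v := by by_contra h; exact hc' ⟨hc, h⟩
      rw [h1, h2, huv]
    · rintro (_ | _)
      · refine Or.inr ⟨fun b hb => ?_, Set.sdiff_subset, fun h => (h hu).2 rfl⟩
        rw [hp b hb.1]; exact hb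
      · refine Or.inr ⟨fun b hb => ?_, Set.sdiff_subset, fun h => (h hv).2 rfl⟩
        rw [hp b hb.1]; exact hb

/-- A finite order element is conjugate either into the dihedral group of an odd edge or into an
elementary abelian parabolic containing no pendant. -/
lemma torsion_cases [Finite B] (hσ : Shape cs σ) {g : W} (hfin : IsOfFinOrder g) :
    ∃ h : W, (∃ t, σ t ≠ t ∧ h * g * h⁻¹ ∈ cs.parabolic {σ t, t}) ∨
      ∃ T : Set B, (∀ b ∈ T, σ b = b) ∧ (∀ b ∈ T, ∀ c ∈ T, b ≠ c → ord cs b c = 2) ∧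
        h * g * h⁻¹ ∈ cs.parabolic T := by
  obtain ⟨h, T, hT, hg⟩ := torsion_clique hσ hfin
  refine ⟨h, ?_⟩
  by_cases hp : ∃ t ∈ T, σ t ≠ t
  · obtain ⟨t, ht, hst⟩ := hp
    refine Or.inl ⟨t, hst, parabolic_mono ?_ hg⟩
    intro b hb
    by_contra hbt
    simp only [Set.mem_insert_iff, Set.mem_singleton_iff, not_or] at hbt
    exact hT t ht b hb (hσ.isol t b hst hbt.2 hbt.1)
  · push Not at hp
    refine Or.inr ⟨T, hp, fun b hb c hc hbc => ?_, hg⟩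
    rcases Nat.even_or_odd (ord cs b c) with he | ho
    · exact hσ.even b c (hT b hb c hc) he
    · rcases hσ.odd b c hbc ho with e | e
      · exact absurd ((hp b hb).symm.trans e) hbc
      · exact absurd ((hp c hc).symm.trans e).symm hbc

lemma mem_parabolic_insert {b : B} {T : Set B}
    (hT : ∀ c ∈ T, Commute (cs.simple b) (cs.simple c)) {g : W}
    (hg : g ∈ cs.parabolic (insert b T)) :
    ∃ h ∈ cs.parabolic T, Commute (cs.simple b) h ∧ (g = h ∨ g = cs.simple b * h) := by
  have hcomm : ∀ h ∈ cs.parabolic T, Commute (cs.simple b) h := by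
    intro h hh
    have : cs.parabolic T ≤ Subgroup.centralizer {cs.simple b} := by
      refine (Subgroup.closure_le _).2 ?_
      rintro _ ⟨c, hc, rfl⟩
      exact Subgroup.mem_centralizer_singleton_iff.2 (hT c hc).eq.symm
    exact (Subgroup.mem_centralizer_singleton_iff.1 (this hh)).symm
  suffices H : ∃ h ∈ cs.parabolic T, g = h ∨ g = cs.simple b * h by
    obtain ⟨h, hh, e⟩ := H
    exact ⟨h, hh, hcomm h hh, e⟩
  have hb := cs.simple_mul_simple_self b
  induction hg using Subgroup.closure_induction with
  | mem x hx =>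
    obtain ⟨c, rfl | hc, rfl⟩ := hx
    · exact ⟨1, one_mem _, Or.inr (by simp)⟩
    · exact ⟨_, simple_mem hc, Or.inl rfl⟩
  | one => exact ⟨1, one_mem _, Or.inl rfl⟩
  | mul x y hx hy ihx ihy =>
    obtain ⟨h, hh, rfl | rfl⟩ := ihx <;> obtain ⟨k, hk, rfl | rfl⟩ := ihy
    · exact ⟨_, mul_mem hh hk, Or.inl rfl⟩
    · exact ⟨_, mul_mem hh hk, Or.inr (by rw [← mul_assoc, ← (hcomm _ hh).eq, mul_assoc])⟩
    · exact ⟨_, mul_mem hh hk, Or.inr (by rw [mul_assoc])⟩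
    · refine ⟨_, mul_mem hh hk, Or.inl ?_⟩
      rw [(hcomm _ hh).eq, mul_assoc, ← mul_assoc (cs.simple b), hb, one_mul]
  | inv x hx ih =>
    obtain ⟨h, hh, rfl | rfl⟩ := ih
    · exact ⟨_, inv_mem hh, Or.inl rfl⟩
    · refine ⟨_, inv_mem hh, Or.inr ?_⟩
      rw [mul_inv_rev, cs.inv_simple, (hcomm _ (inv_mem hh)).eq]

lemma mem_parabolic_singleton {b : B} {g : W} (hg : g ∈ cs.parabolic {b}) :
    g = 1 ∨ g = cs.simple b := by
  rw [← insert_empty_eq] at hg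
  obtain ⟨h, hh, -, e⟩ := mem_parabolic_insert (by simp) hg
  have : h = 1 := by simpa [CoxeterSystem.parabolic] using hh
  simpa [this] using e

lemma commute_of_ord_two {b c : B} (h : ord cs b c = 2) :
    Commute (cs.simple b) (cs.simple c) := by
  have h2 := pow_orderOf_eq_one (cs.simple b * cs.simple c)
  have h3 : orderOf (cs.simple b * cs.simple c) = 2 := h
  rw [h3, sq] at h2
  have := inv_eq_of_mul_eq_one_left h2
  rw [mul_inv_rev, cs.inv_simple, cs.inv_simple] at this
  exact this.symm

lemma sq_of_mem_elementary [Finite B] {T : Set B}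
    (h2 : ∀ b ∈ T, ∀ c ∈ T, b ≠ c → ord cs b c = 2) {g : W} (hg : g ∈ cs.parabolic T) :
    g * g = 1 := by
  induction T, T.toFinite using Set.Finite.induction_on generalizing g with
  | empty =>
    have : g = 1 := by simpa [CoxeterSystem.parabolic] using hg
    simp [this]
  | @insert b T hb _ ih =>
    obtain ⟨h, hh, hc, e⟩ := mem_parabolic_insert (fun c hc => commute_of_ord_two
      (h2 b (Or.inl rfl) c (Or.inr hc) (fun e => hb (e ▸ hc)))) hg
    have hhh := ih (fun b hb c hc => h2 b (Or.inr hb) c (Or.inr hc)) hh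
    rcases e with rfl | rfl
    · exact hhh
    · rw [← sq, hc.mul_pow, sq, sq, cs.simple_mul_simple_self, hhh, one_mul]

lemma sign_commutator (ε : W →* ℤˣ) {g : W} (hg : g ∈ commutator W) : ε g = 1 :=
  Abelianization.commutator_subset_ker ε hg

lemma parabolic_le_ker (ε : W →* ℤˣ) {T : Set B} (hT : ∀ b ∈ T, ε (cs.simple b) = 1) {g : W}
    (hg : g ∈ cs.parabolic T) : ε g = 1 := by
  have : cs.parabolic T ≤ ε.ker := by
    refine (Subgroup.closure_le _).2 ?_
    rintro _ ⟨c, hc, rfl⟩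
    exact hT c hc
  exact this hg

lemma eq_one_of_mem_elementary [Finite B] (hσ : Shape cs σ) {T : Set B} (hT : ∀ b ∈ T, σ b = b)
    (h2 : ∀ b ∈ T, ∀ c ∈ T, b ≠ c → ord cs b c = 2) {g : W} (hg : g ∈ cs.parabolic T)
    (hg' : g ∈ commutator W) : g = 1 := by
  induction T, T.toFinite using Set.Finite.induction_on generalizing g with
  | empty => simpa [CoxeterSystem.parabolic] using hg
  | @insert b T hb _ ih =>
    obtain ⟨h, hh, hc, e⟩ := mem_parabolic_insert (fun c hc => commute_of_ord_two
      (h2 b (Or.inl rfl) c (Or.inr hc) (fun e => hb (e ▸ hc)))) hg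
    rcases e with rfl | rfl
    · exact ih (fun b hb => hT b (Or.inr hb)) (fun b hb c hc => h2 b (Or.inr hb) c (Or.inr hc))
        hh hg'
    · exfalso
      obtain ⟨ε, hε⟩ := exists_sign hσ b
      have h1 := sign_commutator ε hg'
      have h3 : ε h = 1 := parabolic_le_ker ε (fun c hcT => by
        rw [hε, hT c (Or.inr hcT), if_neg]
        rintro rfl
        exact hb hcT) hh
      rw [map_mul, hε, hT b (Or.inl rfl), if_pos rfl, h3] at h1
      exact absurd h1 (by decide)

lemma pair_image (s t : B) : cs.simple '' {s, t} = {cs.simple s, cs.simple t} :=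
  Set.image_pair _ _ _

lemma mem_dihedral {s t : B} {g : W} (hg : g ∈ cs.parabolic {s, t}) :
    ∃ k : ℤ, g = (cs.simple s * cs.simple t) ^ k ∨
      g = (cs.simple s * cs.simple t) ^ k * cs.simple s := by
  rw [CoxeterSystem.parabolic, pair_image] at hg
  exact dihedral_elem (cs.simple_mul_simple_self s) (cs.simple_mul_simple_self t) hg

/-- The reflections of a dihedral group are involutions. -/
lemma reflection_sq {s t : B} (k : ℤ) :
    ((cs.simple s * cs.simple t) ^ k * cs.simple s) *
      ((cs.simple s * cs.simple t) ^ k * cs.simple s) = 1 := by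
  have := mul_zpow_of_sq (cs.simple_mul_simple_self s) (cs.simple_mul_simple_self t) k
  rw [mul_assoc, ← mul_assoc (cs.simple s), this, mul_assoc, cs.simple_mul_simple_self, mul_one,
    ← zpow_add, add_neg_cancel, zpow_zero]

lemma rotation_odd {t : B} (k : ℤ) :
    ((cs.simple (σ t) * cs.simple t) ^ k) ^ ord cs (σ t) t = 1 := by
  rw [← zpow_natCast, ← zpow_mul, mul_comm, zpow_mul, zpow_natCast, pow_orderOf_eq_one, one_zpow]

lemma odd_pend' (hσ : Shape cs σ) {t : B} (ht : σ t ≠ t) : Odd (ord cs (σ t) t) := by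
  rw [ord_comm]; exact hσ.odd_pend t ht

/-- A character that is `-1` on both endpoints of the odd edge of the pendant `t`. -/
lemma exists_sign_pend (hσ : Shape cs σ) (t : B) : ∃ ε : W →* ℤˣ,
    ε (cs.simple (σ t)) = -1 ∧ ε (cs.simple t) = -1 ∧
      ∀ b, σ b ≠ σ t → ε (cs.simple b) = 1 := by
  obtain ⟨ε, hε⟩ := exists_sign hσ (σ t)
  exact ⟨ε, by rw [hε, if_pos (hσ.idem t)], by rw [hε, if_pos rfl],
    fun b hb => by rw [hε, if_neg hb]⟩

/-- The commutator subgroup of `W` has no elements of order two. -/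
lemma eq_one_of_mem_commutator [Finite B] (hσ : Shape cs σ) {g : W} (h2 : g * g = 1)
    (hg : g ∈ commutator W) : g = 1 := by
  have hfin : IsOfFinOrder g := isOfFinOrder_iff_pow_eq_one.2 ⟨2, by norm_num, by rw [sq, h2]⟩
  obtain ⟨h, hh⟩ := torsion_cases hσ hfin
  have hg' : h * g * h⁻¹ ∈ commutator W := Subgroup.Normal.conj_mem inferInstance g hg h
  have h2' : (h * g * h⁻¹) * (h * g * h⁻¹) = 1 := by
    have : (h * g * h⁻¹) * (h * g * h⁻¹) = h * (g * g) * h⁻¹ := by group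
    rw [this, h2]; simp
  rw [← conj_eq_one_iff (a := h)]
  rcases hh with ⟨t, ht, hm⟩ | ⟨T, hT, hT2, hm⟩
  · obtain ⟨k, e | e⟩ := mem_dihedral hm
    · refine eq_one_of_sq_of_odd h2' (odd_pend' hσ ht) ?_
      rw [e]
      exact rotation_odd k
    · exfalso
      obtain ⟨ε, h1, h3, -⟩ := exists_sign_pend hσ t
      have := sign_commutator ε hg'
      rw [e, map_mul, map_zpow, map_mul, h1, h3] at this
      simp at this
  · exact eq_one_of_mem_elementary hσ hT hT2 hm hg'

/-- Up to conjugacy, an involution inverting a nontrivial element of odd order is the base of an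
odd edge, and the inverted element is a rotation of the dihedral group of that edge. -/
lemma conj_to_dihedral [Finite B] (hσ : Shape cs σ) {x r : W} (hx1 : x ≠ 1) (hx : Odd (orderOf x))
    (hr : r * r = 1) (hrx : r * x * r⁻¹ = x⁻¹) :
    ∃ t, σ t ≠ t ∧ ∃ (g : W) (k : ℤ), g * x * g⁻¹ = (cs.simple (σ t) * cs.simple t) ^ k ∧
      g * r * g⁻¹ = cs.simple (σ t) := by
  have hfin : IsOfFinOrder x := orderOf_pos_iff.1 hx.pos
  obtain ⟨h, hh⟩ := torsion_cases hσ hfin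
  have hy1 : h * x * h⁻¹ ≠ 1 := by rwa [Ne, conj_eq_one_iff]
  have hyo : (h * x * h⁻¹) ^ orderOf x = 1 := by rw [conj_pow, pow_orderOf_eq_one]; simp
  have hr' : (h * r * h⁻¹) * (h * r * h⁻¹) = 1 := by
    have : (h * r * h⁻¹) * (h * r * h⁻¹) = h * (r * r) * h⁻¹ := by group
    rw [this, hr]; simp
  have hry : (h * r * h⁻¹) * (h * x * h⁻¹) * (h * r * h⁻¹)⁻¹ = (h * x * h⁻¹)⁻¹ := by
    have : (h * r * h⁻¹) * (h * x * h⁻¹) * (h * r * h⁻¹)⁻¹ = h * (r * x * r⁻¹) * h⁻¹ := by group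
    rw [this, hrx]; group
  rcases hh with ⟨t, ht, hm⟩ | ⟨T, hT, hT2, hm⟩
  swap
  · exact absurd (eq_one_of_sq_of_odd (sq_of_mem_elementary hT2 hm) hx hyo) hy1
  obtain ⟨k, e | e⟩ := mem_dihedral hm
  swap
  · exact absurd (eq_one_of_sq_of_odd (by rw [e]; exact reflection_sq k) hx hyo) hy1
  refine ⟨t, ht, ?_⟩
  obtain ⟨ε, hε1, hε2, -⟩ := exists_sign_pend hσ t
  -- the rotation is not conjugate into `⟨σ t⟩`, so its normaliser is the dihedral group
  have hrD : h * r * h⁻¹ ∈ cs.parabolic {σ t, t} := by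
    have hun : ({σ t, t} : Set B) ∪ {t}ᶜ = Set.univ := by
      ext b; by_cases hb : b = t <;> simp [hb]
    obtain ⟨F, hF⟩ := exists_splitting hσ (X := {σ t, t}) (Y := {t}ᶜ) (by simp [hun]) (by
      rintro b (rfl | rfl) hb c hc hc'
      · exact absurd ht hb
      · simp only [Set.mem_insert_iff, Set.mem_singleton_iff, not_or] at hc'
        exact hσ.isol b c ht hc'.2 hc'.1)
    refine mem_of_conj_mem hF (i := true) hm ?_ ?_ ?_
    · intro y hy hyC
      have hcap : ({σ t, t} : Set B) ∩ {t}ᶜ = {σ t} := by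
        ext b
        simp only [Set.mem_inter_iff, Set.mem_insert_iff, Set.mem_singleton_iff,
          Set.mem_compl_iff]
        constructor
        · rintro ⟨rfl | rfl, hb⟩
          · rfl
          · exact absurd rfl hb
        · rintro rfl
          exact ⟨Or.inl rfl, ht⟩
      rw [hcap] at hyC
      rcases mem_parabolic_singleton hyC with h1 | h1
      · exact hy1 (conj_eq_one_iff.1 h1)
      · have := congrArg ε h1
        rw [e] at this
        simp only [map_mul, map_inv, map_zpow, hε1, hε2] at this
        simp at this
    · apply mem_iSup_pair
      rw [hun, parabolic_univ]
      trivial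
    · rw [hry]
      exact inv_mem hm
  obtain ⟨j, ej | ej⟩ := mem_dihedral hrD
  · exfalso
    have h1 := eq_one_of_sq_of_odd hr' (odd_pend' hσ ht) (by rw [ej]; exact rotation_odd j)
    rw [h1] at hry
    simp only [one_mul, inv_one, mul_one] at hry
    exact hy1 (eq_one_of_sq_of_odd (eq_inv_iff_mul_eq_one.1 hry) hx hyo)
  · obtain ⟨n, hn⟩ := odd_pend' hσ ht
    -- conjugation by the `n j`-th power of the rotation multiplies the reflection by its
    -- `2 n j`-th power, and `(2 n + 1) j` is a multiple of the order
    set s := cs.simple (σ t)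
    set ρ := s * cs.simple t with hρ
    have hs : s * ρ ^ (-((n : ℤ) * j)) = ρ ^ ((n : ℤ) * j) * s := by
      have := mul_zpow_of_sq (cs.simple_mul_simple_self (σ t)) (cs.simple_mul_simple_self t)
        (-((n : ℤ) * j))
      simpa using this
    refine ⟨ρ ^ ((n : ℤ) * j) * h, k, ?_, ?_⟩
    · calc _ = ρ ^ ((n : ℤ) * j) * (h * x * h⁻¹) * (ρ ^ ((n : ℤ) * j))⁻¹ := by group
        _ = _ := by
          rw [e, ← zpow_neg, ← zpow_add, ← zpow_add]
          congr 1; ring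
    · calc _ = ρ ^ ((n : ℤ) * j) * (h * r * h⁻¹) * (ρ ^ ((n : ℤ) * j))⁻¹ := by group
        _ = ρ ^ ((n : ℤ) * j) * ρ ^ j * (s * ρ ^ (-((n : ℤ) * j))) := by
          rw [ej, ← zpow_neg]; simp only [mul_assoc]
        _ = (ρ ^ j) ^ ord cs (σ t) t * s := by
          rw [hs, hn, ← mul_assoc, ← zpow_add, ← zpow_add, ← zpow_natCast, ← zpow_mul]
          congr 2; push_cast; ring
        _ = s := by rw [rotation_odd j, one_mul]

/-- The centraliser of a base has exponent two. -/
lemma sq_of_commute_base [Finite B] (hσ : Shape cs σ) {t : B} (ht : σ t ≠ t) {g : W}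
    (hg : g * cs.simple (σ t) * g⁻¹ = cs.simple (σ t)) : g * g = 1 := by
  obtain ⟨ε, hε1, hε2, hε3⟩ := exists_sign_pend hσ t
  let L : Set B := {u | u ≠ t ∧ u ≠ σ t ∧ ord cs (σ t) u ≠ 0}
  have hLfix : ∀ u ∈ L, σ u = u := by
    rintro u ⟨hut, hus, hu⟩
    by_contra hσu
    by_cases hst : σ t = σ u
    · exact hut (hσ.uniq t u ht hσu hst).symm
    · rw [ord_comm] at hu
      exact hu (hσ.isol u (σ t) hσu (Ne.symm hus) hst)
  have hs1 : cs.simple (σ t) ≠ 1 := fun h => by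
    rw [h, map_one] at hε1; exact absurd hε1 (by decide)
  -- first splitting, over `W_L`: the base has sign `-1`, so it is not conjugate into `W_L`
  have hX : g ∈ cs.parabolic ({σ t, t} ∪ L) := by
    have hun : (({σ t, t} ∪ L) ∪ {σ t, t}ᶜ : Set B) = Set.univ := by
      ext b
      by_cases hb : b ∈ ({σ t, t} : Set B)
      · exact iff_of_true (Or.inl (Or.inl hb)) trivial
      · exact iff_of_true (Or.inr hb) trivial
    obtain ⟨F, hF⟩ := exists_splitting hσ (X := {σ t, t} ∪ L) (Y := {σ t, t}ᶜ) (by simp [hun]) (by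
      intro b hb hb' c hc hc'
      have hbb : b ∈ ({σ t, t} : Set B) := not_not.1 hb'
      simp only [Set.mem_compl_iff, Set.mem_insert_iff, Set.mem_singleton_iff, not_or] at hc
      rcases hbb with rfl | rfl
      · by_contra h0
        exact hc' (Or.inr ⟨hc.2, hc.1, h0⟩)
      · exact hσ.isol b c ht hc.2 hc.1)
    refine mem_of_conj_mem hF (i := true) (x := cs.simple (σ t))
      (simple_mem (Or.inl (Or.inl rfl))) ?_ ?_ ?_
    · intro y hy hyC
      have hyL : y * cs.simple (σ t) * y⁻¹ ∈ cs.parabolic L :=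
        parabolic_mono (by rintro b ⟨hb | hb, hb'⟩; exacts [absurd hb hb', hb]) hyC
      have h1 := parabolic_le_ker ε (fun u hu => hε3 u (by rw [hLfix u hu]; exact hu.2.1)) hyL
      simp only [map_mul, map_inv, hε1] at h1
      simp at h1
    · apply mem_iSup_pair
      rw [hun, parabolic_univ]
      trivial
    · rw [hg]
      exact simple_mem (Or.inl (Or.inl rfl))
  have hun : ({σ t, t} ∪ L : Set B) = {σ t, t} ∪ insert (σ t) L := by
    ext b
    simp only [Set.mem_union, Set.mem_insert_iff, Set.mem_singleton_iff]
    tauto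
  have hcap : ({σ t, t} ∩ insert (σ t) L : Set B) = {σ t} := by
    ext b
    simp only [Set.mem_inter_iff, Set.mem_insert_iff, Set.mem_singleton_iff]
    constructor
    · rintro ⟨rfl | rfl, hb | hb⟩
      · rfl
      · rfl
      · exact hb
      · exact absurd rfl hb.1
    · rintro rfl
      exact ⟨Or.inl rfl, Or.inl rfl⟩
  rw [hun] at hX
  obtain ⟨F, hF⟩ := exists_splitting hσ (X := {σ t, t}) (Y := insert (σ t) L) (by
      rw [← hun]
      rintro b ((rfl | rfl) | hb)
      · rw [hσ.idem]; exact Or.inl (Or.inl rfl)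
      · exact Or.inl (Or.inl rfl)
      · rw [hLfix b hb]; exact Or.inr hb) (by
      rintro b (rfl | rfl) hb c hc hc'
      · exact absurd (Or.inl rfl) hb
      · simp only [Set.mem_insert_iff, Set.mem_singleton_iff, not_or] at hc'
        exact hσ.isol b c ht hc'.2 hc'.1)
  -- second splitting, over `⟨σ t⟩`, which is self-normalising in the dihedral group of the edge
  have hY : g ∈ cs.parabolic (insert (σ t) L) := by
    refine mem_of_commute hF (i := false) (c := cs.simple (σ t)) ?_ hs1 ?_ (mem_iSup_pair hX) hg
    · rw [hcap]; exact simple_mem rfl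
    · intro j hj y hy c hc hc1 hyc
      rw [hcap] at hc hyc ⊢
      obtain rfl := (mem_parabolic_singleton hc).resolve_left hc1
      have hyc' := (mem_parabolic_singleton hyc).resolve_left (by rwa [conj_eq_one_iff])
      have hj' : j = true := by simpa using hj
      subst hj'
      have key : ∀ k : ℤ, (cs.simple (σ t) * cs.simple t) ^ k * cs.simple (σ t) *
          ((cs.simple (σ t) * cs.simple t) ^ k)⁻¹ = cs.simple (σ t) →
          (cs.simple (σ t) * cs.simple t) ^ k = 1 := by
        intro k hk
        have h1 := mul_zpow_of_sq (cs.simple_mul_simple_self (σ t)) (cs.simple_mul_simple_self t)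
          (-k)
        rw [neg_neg] at h1
        rw [← zpow_neg, mul_assoc, h1, ← mul_assoc, mul_eq_right] at hk
        exact eq_one_of_sq_of_odd hk (odd_pend' hσ ht) (rotation_odd k)
      obtain ⟨k, rfl | rfl⟩ := mem_dihedral hy
      · rw [key k hyc']; exact one_mem _
      · rw [key k (by
          have h2 : ∀ a s : W, a * s * s * (a * s)⁻¹ = a * s * a⁻¹ := fun a s => by group
          rwa [h2] at hyc'), one_mul]
        exact simple_mem rfl
  refine sq_of_mem_elementary ?_ hY
  have hsu : ∀ u ∈ L, ord cs (σ t) u = 2 := by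
    intro u hu
    rcases Nat.even_or_odd (ord cs (σ t) u) with he | ho
    · exact hσ.even _ _ hu.2.2 he
    · rcases hσ.odd _ _ (Ne.symm hu.2.1) ho with e | e
      · rw [hσ.idem] at e; exact absurd e.symm hu.2.1
      · rw [hLfix u hu] at e; exact absurd e hu.2.1
  rintro b (rfl | hb) c (rfl | hc) hbc
  · exact absurd rfl hbc
  · exact hsu c hc
  · rw [ord_comm]; exact hsu b hb
  · exact hσ.link t b c ht hb.1 hb.2.1 hc.1 hc.2.1 hbc hb.2.2 hc.2.2

/-- Two odd order elements inverted by the same involution `r` commute up to conjugation by an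
involution commuting with `r`. -/
lemma exists_commuting_conj [Finite B] (hσ : Shape cs σ) {x y r : W} (hx1 : x ≠ 1)
    (hx : Odd (orderOf x)) (hy1 : y ≠ 1) (hy : Odd (orderOf y)) (hr : r * r = 1)
    (hrx : r * x * r⁻¹ = x⁻¹) (hry : r * y * r⁻¹ = y⁻¹) :
    ∃ c : W, c * c = 1 ∧ Commute c r ∧ Commute (c * x * c⁻¹) y := by
  obtain ⟨t, ht, g, k, hgx, hgr⟩ := conj_to_dihedral hσ hx1 hx hr hrx
  obtain ⟨u, hu, h, l, hhy, hhr⟩ := conj_to_dihedral hσ hy1 hy hr hry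
  -- conjugate bases have equal signs, hence coincide
  have htu : t = u := by
    obtain ⟨ε, hε1, -, hε3⟩ := exists_sign_pend hσ t
    refine hσ.uniq t u ht hu ?_
    by_contra hne
    have h1 := congrArg ε hgr
    have h2 := congrArg ε hhr
    rw [hε3 (σ u) (by rw [hσ.idem]; exact Ne.symm hne)] at h2
    rw [hε1] at h1
    simp only [map_mul, map_inv, mul_inv_cancel_comm] at h1 h2
    rw [h1] at h2
    exact absurd h2 (by decide)
  subst htu
  have e1 : g * r = cs.simple (σ t) * g := by rw [← hgr]; group
  have e2 : h⁻¹ * cs.simple (σ t) = r * h⁻¹ := by rw [← hhr]; group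
  have hcomm : Commute (h⁻¹ * g) r := by
    change h⁻¹ * g * r = r * (h⁻¹ * g)
    rw [mul_assoc, e1, ← mul_assoc, e2, mul_assoc]
  refine ⟨h⁻¹ * g, ?_, hcomm, ?_⟩
  · have := sq_of_commute_base hσ ht (g := g * (h⁻¹ * g) * g⁻¹) (by
      rw [← hgr]
      calc _ = g * ((h⁻¹ * g) * r * (h⁻¹ * g)⁻¹) * g⁻¹ := by group
        _ = _ := by rw [hcomm.eq, mul_inv_cancel_right])
    have h3 : g * (h⁻¹ * g) * g⁻¹ * (g * (h⁻¹ * g) * g⁻¹) = g * ((h⁻¹ * g) * (h⁻¹ * g)) * g⁻¹ := by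
      group
    rw [h3, conj_eq_one_iff] at this
    exact this
  · have h3 : h⁻¹ * g * x * (h⁻¹ * g)⁻¹ = h⁻¹ * (g * x * g⁻¹) * h := by group
    have h4 : y = h⁻¹ * (h * y * h⁻¹) * h := by group
    rw [h3, h4, hgx, hhy]
    have h5 := ((Commute.refl (cs.simple (σ t) * cs.simple t)).zpow_zpow k l)
    have := h5.map (MulAut.conj h⁻¹).toMonoidHom
    simpa using this

end Torsion

/-! ### The shape of the Coxeter diagram -/

section ShapeOf

variable {B W : Type*} [Group W] {M : CoxeterMatrix B} {cs : CoxeterSystem M W}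

lemma isSpherical_pair {s u : B} (h : ord cs s u ≠ 0) : cs.IsSpherical {s, u} := by
  have hfo : IsOfFinOrder (cs.simple s * cs.simple u) := orderOf_ne_zero_iff.1 h
  have hf : (Subgroup.zpowers (cs.simple s * cs.simple u) : Set W).Finite :=
    finite_zpowers.2 hfo
  have : (cs.parabolic {s, u} : Set W).Finite := by
    refine (hf.union (hf.image (· * cs.simple s))).subset ?_
    intro g hg
    obtain ⟨k, e | e⟩ := mem_dihedral hg
    · exact Or.inl ⟨k, e.symm⟩
    · exact Or.inr ⟨_, ⟨k, rfl⟩, e.symm⟩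
  exact this

lemma ord_ne_zero_of_isSpherical {T : Set B} (hT : cs.IsSpherical T) {u v : B} (hu : u ∈ T)
    (hv : v ∈ T) : ord cs u v ≠ 0 := by
  have : Finite (cs.parabolic T) := hT
  have h := orderOf_pos
    (⟨cs.simple u * cs.simple v, mul_mem (simple_mem hu) (simple_mem hv)⟩ : cs.parabolic T)
  rw [Subgroup.orderOf_mk] at h
  exact h.ne'

lemma exists_isMaxSpherical [Finite B] {s u : B} (h : ord cs s u ≠ 0) :
    ∃ T, cs.IsMaxSpherical T ∧ s ∈ T ∧ u ∈ T := by
  obtain ⟨T, hle, hT⟩ := (Set.toFinite {T : Set B | cs.IsSpherical T}).exists_le_maximal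
    (isSpherical_pair h)
  exact ⟨T, ⟨hT.1, fun U hU hTU => (hT.2 hU hTU).antisymm hTU⟩, hle (Or.inl rfl),
    hle (Or.inr rfl)⟩

lemma not_three_max [Finite B] {s t : B}
    (h3 : {T : Set B | cs.IsMaxSpherical T ∧ (T ∩ {s, t}).Nonempty}.ncard ≤ 2)
    {T₁ T₂ T₃ : Set B} (m₁ : cs.IsMaxSpherical T₁) (m₂ : cs.IsMaxSpherical T₂)
    (m₃ : cs.IsMaxSpherical T₃) (n₁ : (T₁ ∩ {s, t}).Nonempty) (n₂ : (T₂ ∩ {s, t}).Nonempty)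
    (n₃ : (T₃ ∩ {s, t}).Nonempty) (h₁₂ : T₁ ≠ T₂) (h₁₃ : T₁ ≠ T₃) (h₂₃ : T₂ ≠ T₃) : False := by
  have := (Set.two_lt_ncard_iff (Set.toFinite
    {T : Set B | cs.IsMaxSpherical T ∧ (T ∩ {s, t}).Nonempty})).2
    ⟨T₁, T₂, T₃, ⟨m₁, n₁⟩, ⟨m₂, n₂⟩, ⟨m₃, n₃⟩, h₁₂, h₁₃, h₂₃⟩
  omega

/-- One end of an odd edge has no further neighbour: otherwise three maximal spherical subsets
would meet the edge. -/
lemma isolated_end [Finite B] {s t : B} (h1 : cs.IsMaxSpherical {s, t})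
    (h3 : {T : Set B | cs.IsMaxSpherical T ∧ (T ∩ {s, t}).Nonempty}.ncard ≤ 2) :
    (∀ u, u ≠ s → u ≠ t → ord cs s u = 0) ∨ (∀ u, u ≠ s → u ≠ t → ord cs t u = 0) := by
  by_contra! hcon
  obtain ⟨⟨u, hus, hut, hu⟩, v, hvs, hvt, hv⟩ := hcon
  obtain ⟨T₁, m₁, hs, hu'⟩ := exists_isMaxSpherical hu
  obtain ⟨T₂, m₂, ht, hv'⟩ := exists_isMaxSpherical hv
  have key : ∀ T, cs.IsMaxSpherical T → s ∈ T → t ∈ T → T = {s, t} := fun T m a b =>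
    h1.2 T m.1 (by rintro x (rfl | rfl); exacts [a, b])
  have e₁ : T₁ ≠ {s, t} := by
    rintro rfl
    rcases hu' with h | h
    exacts [hus h, hut h]
  have e₂ : T₂ ≠ {s, t} := by
    rintro rfl
    rcases hv' with h | h
    exacts [hvs h, hvt h]
  refine not_three_max h3 m₁ m₂ h1 ⟨s, hs, Or.inl rfl⟩ ⟨t, ht, Or.inr rfl⟩
    ⟨s, Or.inl rfl, Or.inl rfl⟩ ?_ e₁ e₂
  rintro rfl
  exact e₁ (key _ m₁ hs ht)

lemma link_commute [Finite B]
    (h0 : ∀ i j : B, ord cs i j ≠ 0 → Even (ord cs i j) → ord cs i j = 2)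
    (h1 : ∀ i j : B, i ≠ j → Odd (ord cs i j) → cs.IsMaxSpherical {i, j}) {s t : B}
    (hm : cs.IsMaxSpherical {s, t})
    (h3 : {T : Set B | cs.IsMaxSpherical T ∧ (T ∩ {s, t}).Nonempty}.ncard ≤ 2)
    {u v : B} (hut : u ≠ t) (hus : u ≠ s) (hvt : v ≠ t) (hvs : v ≠ s) (huv : u ≠ v)
    (hu : ord cs s u ≠ 0) (hv : ord cs s v ≠ 0) : ord cs u v = 2 := by
  obtain ⟨T₁, m₁, hs, hu'⟩ := exists_isMaxSpherical hu
  obtain ⟨T₂, m₂, ht, hv'⟩ := exists_isMaxSpherical hv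
  have e₁ : T₁ ≠ {s, t} := by
    rintro rfl
    rcases hu' with h | h
    exacts [hus h, hut h]
  have e₂ : T₂ ≠ {s, t} := by
    rintro rfl
    rcases hv' with h | h
    exacts [hvs h, hvt h]
  have e : T₁ = T₂ := by
    by_contra hne
    exact not_three_max h3 m₁ m₂ hm ⟨s, hs, Or.inl rfl⟩ ⟨s, ht, Or.inl rfl⟩
      ⟨s, Or.inl rfl, Or.inl rfl⟩ hne e₁ e₂
  subst e
  have hne := ord_ne_zero_of_isSpherical m₁.1 hu' hv'
  rcases Nat.even_or_odd (ord cs u v) with he | ho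
  · exact h0 u v hne he
  · have := (h1 u v huv ho).2 T₁ m₁.1 (by rintro x (rfl | rfl); exacts [hu', hv'])
    rw [this] at hs
    rcases hs with h | h
    exacts [absurd h.symm hus, absurd h.symm hvs]

/-- Conditions (0)–(3) give the combinatorial shape. When both ends of an odd edge are isolated, an
auxiliary well-order decides which of them is called the pendant one. -/
lemma exists_shape [Finite B]
    (h0 : ∀ i j : B, ord cs i j ≠ 0 → Even (ord cs i j) → ord cs i j = 2)
    (h1 : ∀ i j : B, i ≠ j → Odd (ord cs i j) → cs.IsMaxSpherical {i, j})
    (h2 : ¬ ∃ i j k : B, i ≠ j ∧ j ≠ k ∧ i ≠ k ∧ Odd (ord cs i j) ∧ Odd (ord cs j k))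
    (h3 : ∀ i j : B, i ≠ j → Odd (ord cs i j) →
      {T : Set B | cs.IsMaxSpherical T ∧ (T ∩ {i, j}).Nonempty}.ncard ≤ 2) :
    ∃ σ, Shape cs σ := by
  classical
  -- `P t s`: `t` is the pendant end and `s` the base of an odd edge
  let P : B → B → Prop := fun t s => s ≠ t ∧ Odd (ord cs t s) ∧
    (∀ u, u ≠ t → u ≠ s → ord cs t u = 0) ∧
    ((∃ u, u ≠ t ∧ u ≠ s ∧ ord cs s u ≠ 0) ∨ WellOrderingRel t s)
  let σ : B → B := fun t => if h : ∃ s, P t s then h.choose else t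
  have partner : ∀ s t u, s ≠ t → s ≠ u → Odd (ord cs s t) → Odd (ord cs s u) → t = u := by
    intro s t u hst hsu ht hu
    by_contra hne
    exact h2 ⟨t, s, u, hst.symm, hsu, hne, by rwa [ord_comm], hu⟩
  have hP : ∀ t, σ t ≠ t → P t (σ t) := by
    intro t ht
    by_cases h : ∃ s, P t s
    · simp only [σ, dif_pos h]
      exact h.choose_spec
    · exact absurd (by simp only [σ, dif_neg h]) ht
  have hPσ : ∀ t s, P t s → σ t = s := by
    intro t s hp
    have h : ∃ s, P t s := ⟨s, hp⟩
    have hs := h.choose_spec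
    simp only [σ, dif_pos h]
    exact partner t _ s hs.1.symm hp.1.symm hs.2.1 hp.2.1
  have hbase : ∀ t s, P t s → σ s = s := by
    intro t s hp
    by_contra hne
    have hq := hP s hne
    have e : σ s = t := partner s _ t hq.1.symm hp.1 hq.2.1 (by rw [ord_comm]; exact hp.2.1)
    rw [e] at hq
    obtain ⟨-, -, iso, ⟨u, a, b, c⟩ | lt⟩ := hp
    · exact c (hq.2.2.1 u b a)
    · obtain ⟨-, -, -, ⟨u, a, b, c⟩ | lt'⟩ := hq
      · exact c (iso u b a)
      · exact asymm_of WellOrderingRel lt lt'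
  refine ⟨σ, ⟨h0, ?_, fun t ht => (hP t ht).2.1, fun t u ht => (hP t ht).2.2.1 u, ?_, ?_, ?_⟩⟩
  · intro b c hbc ho
    have ho' : Odd (ord cs c b) := by rwa [ord_comm]
    have main : P b c ∨ P c b := by
      rcases isolated_end (h1 b c hbc ho) (h3 b c hbc ho) with hi | hi
      · by_cases hc : ∃ u, u ≠ b ∧ u ≠ c ∧ ord cs c u ≠ 0
        · exact Or.inl ⟨hbc.symm, ho, hi, Or.inl hc⟩
        · push Not at hc
          rcases trichotomous_of WellOrderingRel b c with h | h | h
          · exact Or.inl ⟨hbc.symm, ho, hi, Or.inr h⟩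
          · exact absurd h hbc
          · exact Or.inr ⟨hbc, ho', fun u a b => hc u b a, Or.inr h⟩
      · by_cases hc : ∃ u, u ≠ c ∧ u ≠ b ∧ ord cs b u ≠ 0
        · exact Or.inr ⟨hbc, ho', fun u a b => hi u b a, Or.inl hc⟩
        · push Not at hc
          rcases trichotomous_of WellOrderingRel b c with h | h | h
          · exact Or.inl ⟨hbc.symm, ho, fun u a b => hc u b a, Or.inr h⟩
          · exact absurd h hbc
          · exact Or.inr ⟨hbc, ho', fun u a b => hi u b a, Or.inr h⟩
    exact main.imp (hPσ b c) (hPσ c b)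
  · intro b
    by_cases hb : σ b = b
    · rw [hb, hb]
    · exact hbase b _ (hP b hb)
  · intro t u ht hu e
    have a := hP t ht
    have b := hP u hu
    rw [← e] at b
    exact partner (σ t) t u a.1 b.1 (by rw [ord_comm]; exact a.2.1) (by rw [ord_comm]; exact b.2.1)
  · intro t u v ht hut hus hvt hvs huv hu hv
    have a := hP t ht
    have ho : Odd (ord cs (σ t) t) := by rw [ord_comm]; exact a.2.1
    exact link_commute h0 h1 (h1 _ _ a.1 ho) (h3 _ _ a.1 ho) hut hus hvt hvs huv hu hv

end ShapeOf

/-! ### A reflection representation -/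

section Geometric

open Polynomial.Chebyshev Real

/-- Two reflections whose pairing numbers multiply to `4 cos² (π / m)` generate a rotation of order
dividing `m`. -/
lemma reflection_mul_pow {V : Type*} [AddCommGroup V] [Module ℝ V] {x y : V}
    {f g : Module.Dual ℝ V} (hf : f x = 2) (hg : g y = 2) {m : ℕ} (hm : 3 ≤ m)
    (h : f y * g x = 4 * cos (π / m) ^ 2) :
    (Module.reflection hf * Module.reflection hg) ^ m = 1 := by
  have hm0 : (0 : ℝ) < m := by positivity
  have hm3 : (3 : ℝ) ≤ m := by exact_mod_cast hm
  obtain ⟨θ, hθ⟩ : ∃ θ : ℝ, θ = 2 * π / m := ⟨_, rfl⟩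
  have hmθ : (m : ℝ) * θ = 2 * π := by rw [hθ]; field_simp
  have hsin : sin θ ≠ 0 := by
    refine (sin_pos_of_pos_of_lt_pi (by rw [hθ]; positivity) ?_).ne'
    have := pi_pos
    nlinarith
  have ht : 2 * cos θ = f y * g x - 2 := by
    have : θ = 2 * (π / m) := by rw [hθ]; ring
    rw [h, this, cos_two_mul]
    ring
  have hS : ∀ n : ℤ, (S ℝ n).eval (2 * cos θ) * sin θ = sin ((n + 1) * θ) := fun n =>
    S_two_mul_real_cos θ n
  ext z
  rw [Module.reflection_mul_reflection_pow_apply hf hg m z (2 * cos θ) ht]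
  rcases Nat.even_or_odd' m with ⟨k, rfl | rfl⟩
  · have h1 : (S ℝ ((k : ℤ) - 1)).eval (2 * cos θ) = 0 := by
      have := hS ((k : ℤ) - 1)
      have e : (((k : ℤ) - 1 : ℤ) + 1 : ℝ) * θ = π := by
        push_cast at hmθ ⊢
        linarith
      rw [e, sin_pi] at this
      exact (mul_eq_zero.1 this).resolve_right hsin
    have e1 : (((2 * k : ℕ) : ℤ) - 2) / 2 = k - 1 := by omega
    have e2 : (((2 * k : ℕ) : ℤ) - 1) / 2 = k - 1 := by omega
    rw [e1, e2, h1]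
    simp
  · have h1 : (S ℝ (k : ℤ)).eval (2 * cos θ) + (S ℝ ((k : ℤ) - 1)).eval (2 * cos θ) = 0 := by
      have a := hS (k : ℤ)
      have b := hS ((k : ℤ) - 1)
      have e : (((k : ℤ) : ℝ) + 1) * θ = 2 * π - (((k : ℤ) - 1 : ℤ) + 1 : ℝ) * θ := by
        push_cast at hmθ ⊢
        linarith
      rw [e, sin_two_pi_sub, ← b] at a
      have : ((S ℝ (k : ℤ)).eval (2 * cos θ) + (S ℝ ((k : ℤ) - 1)).eval (2 * cos θ)) * sin θ = 0 := by
        linarith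
      exact (mul_eq_zero.1 this).resolve_right hsin
    have e1 : (((2 * k + 1 : ℕ) : ℤ) - 2) / 2 = k - 1 := by omega
    have e2 : (((2 * k + 1 : ℕ) : ℤ) - 1) / 2 = k := by omega
    have e3 : (((2 * k + 1 : ℕ) : ℤ) - 3) / 2 = k - 1 := by omega
    have e4 : (((2 * k + 1 : ℕ) : ℤ)) / 2 = k := by omega
    rw [e1, e2, e3, e4, h1]
    simp

variable {B W : Type*} [Group W] {M : CoxeterMatrix B} (cs : CoxeterSystem M W)

/-- A reflection representation of `W` on `B → ℝ`, dual to the geometric one. Infinite labels are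
treated as `3`, so that `A v w * A w v < 4` for all distinct `v` and `w`. -/
lemma exists_rep : ∃ (A : B → B → ℝ) (ρ : W →* ((B → ℝ) ≃ₗ[ℝ] (B → ℝ))),
    (∀ v p, ρ (cs.simple v) p = p - p v • A v) ∧ (∀ v, A v v = 2) ∧
    (∀ v w, v ≠ w → A v w * A w v < 4) ∧ (∀ v w, A v w = 0 → M v w = 2) := by
  classical
  let m : B → B → ℕ := fun v w => if M v w = 0 then 3 else M v w
  let A : B → B → ℝ := fun v w => -2 * cos (π / m v w)
  have hmM : ∀ v w, M v w ≠ 0 → m v w = M v w := fun v w h => if_neg h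
  have hsymm : ∀ v w, m v w = m w v := fun v w => by simp only [m, M.symmetric v w]
  have hm2 : ∀ v w, v ≠ w → 2 ≤ m v w := fun v w h => by
    have := M.off_diagonal v w h
    simp only [m]
    split_ifs <;> omega
  have hA2 : ∀ v, A v v = 2 := fun v => by
    simp [A, m]
  have hAprod : ∀ v w, A v w * A w v = 4 * cos (π / m v w) ^ 2 := fun v w => by
    simp only [A, hsymm w v]; ring
  have hAzero : ∀ v w, A v w = 0 → m v w = 2 := by
    intro v w h
    by_contra hne
    have h1 : v ≠ w := by
      rintro rfl
      rw [hA2] at h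
      norm_num at h
    have h3 : 3 ≤ m v w := by have := hm2 v w h1; omega
    have h3' : (3 : ℝ) ≤ m v w := by exact_mod_cast h3
    have hpos : 0 < cos (π / m v w) := by
      have := pi_pos
      apply cos_pos_of_mem_Ioo
      constructor
      · have : 0 < π / m v w := by positivity
        linarith
      · exact div_lt_div_of_pos_left this (by norm_num) (by linarith)
    simp only [A] at h
    linarith
  have hAtwo : ∀ v w, m v w = 2 → A v w = 0 := by
    intro v w h
    simp [A, h]
  let f : B → Module.Dual ℝ (B → ℝ) := fun v => LinearMap.proj v
  have hf : ∀ v, f v (A v) = 2 := hA2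
  let R : B → ((B → ℝ) ≃ₗ[ℝ] (B → ℝ)) := fun v => Module.reflection (hf v)
  have hR : ∀ v p, R v p = p - p v • A v := fun v p => Module.reflection_apply p (hf v)
  have hl : M.IsLiftable R := by
    intro v w
    by_cases h0 : M v w = 0
    · rw [h0, pow_zero]
    by_cases hvw : v = w
    · subst hvw
      rw [M.diagonal, pow_one]
      ext1 p
      exact Module.involutive_reflection (hf v) p
    have hm := hmM v w h0
    rcases (hm2 v w hvw).eq_or_lt with e | e
    · have a1 := hAtwo v w e.symm
      have a2 := hAtwo w v (by rw [hsymm, e])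
      rw [← hm, ← e, sq]
      ext1 p
      simp only [LinearEquiv.mul_apply, hR]
      ext q
      simp [a1, a2, hA2]
      ring
    · rw [← hm]
      refine reflection_mul_pow (hf v) (hf w) e ?_
      rw [← hAprod, mul_comm]
      rfl
  refine ⟨A, cs.lift ⟨R, hl⟩, ?_, hA2, ?_, ?_⟩
  · intro v p
    rw [cs.lift_apply_simple hl, hR]
  · intro v w h
    rw [hAprod]
    have h2 : (2 : ℝ) ≤ m v w := by exact_mod_cast hm2 v w h
    have hpi := pi_pos
    have hlt : π / m v w < π := by
      rw [div_lt_iff₀ (by linarith)]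
      nlinarith
    have hs : 0 < sin (π / m v w) := sin_pos_of_pos_of_lt_pi (by positivity) hlt
    have := sin_sq_add_cos_sq (π / m v w)
    nlinarith
  · intro v w h
    have := hAzero v w h
    simp only [m] at this
    split_ifs at this
    · omega
    · exact this

lemma simple_ne {v w : B} (h : v ≠ w) : cs.simple v ≠ cs.simple w := by
  classical
  obtain ⟨A, ρ, hρ, h2, -, -⟩ := exists_rep cs
  intro e
  have h1 := hρ v (Pi.single w 1)
  rw [e, hρ] at h1
  have h3 := congrFun h1 w
  simp [h2, h] at h3

/-- If `m(t, u)` is odd, then `s t` and `t u` do not commute. Otherwise `s u t = t u s`, and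
evaluating both sides at the basis vector of `t` in the reflection representation forces
`A u s * A s u = 4`. -/
lemma not_commute {s t u : B} (htu : t ≠ u) (hst : s ≠ t) (hsu : s ≠ u)
    (hodd : Odd (ord cs t u)) :
    ¬ Commute (cs.simple s * cs.simple t) (cs.simple t * cs.simple u) := by
  classical
  obtain ⟨A, ρ, hρ, h2, hlt, hzero⟩ := exists_rep cs
  intro hc
  have hA : A t u ≠ 0 := fun h => by
    have hd := ord_dvd cs t u
    rw [hzero t u h] at hd
    have : ord cs t u = 1 := by
      rcases (Nat.dvd_prime Nat.prime_two).1 hd with e | e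
      · exact e
      · rw [e] at hodd
        exact absurd hodd (by decide)
    rw [ord, orderOf_eq_one_iff] at this
    exact simple_ne cs htu (by rw [← cs.inv_simple u]; exact eq_inv_of_mul_eq_one_left this)
  have e : cs.simple s * cs.simple u * cs.simple t = cs.simple t * cs.simple u * cs.simple s := by
    have := congrArg (· * cs.simple t) hc.eq
    simpa [mul_assoc] using this
  have h := congrArg (fun g => ρ g (Pi.single t 1)) e
  simp only [map_mul, LinearEquiv.mul_apply, hρ] at h
  have hu := congrFun h u
  have hs := congrFun h s
  simp [h2, htu.symm, hst] at hu hs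
  have key : A u s * A s u = 4 := by
    apply mul_left_cancel₀ hA
    linear_combination A s u * hs - 2 * hu
  exact (hlt u s hsu.symm).ne key

end Geometric

/-! ### Transfer through the isomorphism -/

section Final

variable {B W : Type*} [Group W] {M : CoxeterMatrix B} {cs : CoxeterSystem M W}

lemma abelianization_of_eq_one {G : Type*} [Group G] {g : G} :
    Abelianization.of g = 1 ↔ g ∈ commutator G := by
  rw [← MonoidHom.mem_ker, Abelianization.ker_of]

lemma abelianization_eq_of_odd {v w : B} (h : Odd (ord cs v w)) :
    Abelianization.of (cs.simple v) = Abelianization.of (cs.simple w) := by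
  have hsq : ∀ b, Abelianization.of (cs.simple b) * Abelianization.of (cs.simple b) = 1 :=
    fun b => by rw [← map_mul, cs.simple_mul_simple_self, map_one]
  have h1 : Abelianization.of (cs.simple v) * Abelianization.of (cs.simple w) = 1 := by
    refine eq_one_of_sq_of_odd ?_ h ?_
    · rw [mul_mul_mul_comm, hsq, hsq, one_mul]
    · rw [← map_mul, ← map_pow, pow_orderOf_eq_one, map_one]
  rw [← mul_right_cancel_iff (a := Abelianization.of (cs.simple w)), h1, hsq]

/-- `W` retracts onto the parabolic subgroup of a connected component of the graph of odd edges,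
and this subgroup becomes cyclic of order at most two in the abelianization of `W`. -/
lemma exists_odd_retraction (cs : CoxeterSystem M W) (t : B) : ∃ ρ : W →* W,
    ρ (cs.simple t) = cs.simple t ∧
    (∀ v, Odd (ord cs t v) → ρ (cs.simple v) = cs.simple v) ∧
    ∀ w, Abelianization.of (ρ w) = 1 ∨
      Abelianization.of (ρ w) = Abelianization.of (cs.simple t) := by
  classical
  let C : Set B := {v | Relation.ReflTransGen (fun v w => Odd (ord cs v w)) t v}
  have hC : ∀ v w, v ∈ C → Odd (ord cs v w) → w ∈ C := fun v w hv h =>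
    Relation.ReflTransGen.tail hv h
  have hab : ∀ v ∈ C, Abelianization.of (cs.simple v) = Abelianization.of (cs.simple t) := by
    intro v hv
    induction hv with
    | refl => rfl
    | tail _ h ih => rw [← ih, abelianization_eq_of_odd h]
  have heven : ∀ v w, v ∈ C → w ∉ C → cs.simple v ^ ord cs v w = 1 := by
    intro v w hv hw
    rcases Nat.even_or_odd' (ord cs v w) with ⟨k, e | e⟩
    · rw [e, pow_mul, sq, cs.simple_mul_simple_self, one_pow]
    · exact absurd (hC v w hv ⟨k, e⟩) hw
  obtain ⟨ρ, hρ⟩ := exists_hom cs (fun v => if v ∈ C then cs.simple v else 1) (by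
    intro v w
    by_cases hv : v ∈ C <;> by_cases hw : w ∈ C
    · simp only [hv, hw, if_true, pow_orderOf_eq_one]
    · simp only [hv, hw, if_true, if_false, mul_one]
      exact heven v w hv hw
    · simp only [hv, hw, if_true, if_false, one_mul]
      rw [ord_comm]
      exact heven w v hw hv
    · simp [hv, hw])
  have ht : t ∈ C := Relation.ReflTransGen.refl
  refine ⟨ρ, ?_, ?_, ?_⟩
  · rw [hρ, if_pos ht]
  · intro v hv
    rw [hρ, if_pos (hC t v ht hv)]
  · have htt : Abelianization.of (cs.simple t) * Abelianization.of (cs.simple t) = 1 := by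
      rw [← map_mul, cs.simple_mul_simple_self, map_one]
    intro w
    induction w using cs.simple_induction_left with
    | one => left; simp
    | mul_simple_left w i ih =>
      rw [map_mul, map_mul, hρ]
      split_ifs with hi
      · rw [hab i hi]
        rcases ih with e | e <;> rw [e]
        · right; rw [mul_one]
        · left; exact htt
      · simpa using ih

/-- A group with a Coxeter system of the given shape has no Coxeter system with two consecutive odd
edges. -/
lemma no_odd_path {B' W' : Type*} [Group W'] {M' : CoxeterMatrix B'} [Finite B] {σ : B → B}
    (hσ : Shape cs σ) (cs' : CoxeterSystem M' W') (φ : W ≃* W') {s t u : B'} (hst : s ≠ t)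
    (htu : t ≠ u) (hsu : s ≠ u) (h1 : Odd (ord cs' s t)) (h2 : Odd (ord cs' t u)) : False := by
  -- involutions in the commutator subgroup are trivial, in `W` and hence in `W'`
  have hinv : ∀ g : W', g * g = 1 → Abelianization.of g = 1 → g = 1 := by
    intro g hg hab
    have : φ.symm g = 1 := by
      refine eq_one_of_mem_commutator hσ ?_ ?_
      · rw [← map_mul, hg, map_one]
      · rw [← abelianization_of_eq_one]
        have := congrArg (Abelianization.map φ.symm.toMonoidHom) hab
        rwa [Abelianization.map_of, map_one] at this
    simpa using this
  have htsq := cs'.simple_mul_simple_self t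
  have hne : ∀ v w, v ≠ w → φ.symm (cs'.simple v * cs'.simple w) ≠ 1 := by
    intro v w hvw e
    rw [map_eq_one_iff φ.symm φ.symm.injective] at e
    exact simple_ne cs' hvw (by rw [← cs'.inv_simple w]; exact eq_inv_of_mul_eq_one_left e)
  obtain ⟨c, hc, hcr, hcxy⟩ := exists_commuting_conj hσ
    (x := φ.symm (cs'.simple s * cs'.simple t)) (y := φ.symm (cs'.simple t * cs'.simple u))
    (r := φ.symm (cs'.simple t)) (hne s t hst) (by rwa [MulEquiv.orderOf_eq]) (hne t u htu)
    (by rwa [MulEquiv.orderOf_eq]) (by rw [← map_mul, htsq, map_one])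
    (by simp [← map_mul, ← map_inv, mul_assoc]) (by simp [← map_mul, ← map_inv])
  obtain ⟨ρ, hρt, hρ, hρab⟩ := exists_odd_retraction cs' t
  obtain ⟨d, hd⟩ : ∃ d, d = ρ (φ c) := ⟨_, rfl⟩
  have hdd : d * d = 1 := by rw [hd, ← map_mul, ← map_mul, hc, map_one, map_one]
  have hdt : Commute d (cs'.simple t) := by
    have := (hcr.map φ.toMonoidHom).map ρ
    simpa [hρt, ← hd] using this
  have hdxy : Commute (d * (cs'.simple s * cs'.simple t) * d⁻¹) (cs'.simple t * cs'.simple u) := by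
    have := (hcxy.map φ.toMonoidHom).map ρ
    simpa [hρt, hρ s (by rwa [ord_comm]), hρ u h2, ← hd] using this
  apply not_commute cs' htu hst hsu h2
  rcases hd ▸ hρab (φ c) with e | e
  · rw [hinv d hdd e] at hdxy
    simpa using hdxy
  · have : d * cs'.simple t = 1 := by
      apply hinv
      · rw [← sq, hdt.mul_pow, sq, sq, hdd, htsq, one_mul]
      · rw [map_mul, e, ← map_mul, htsq, map_one]
    have e' : d = cs'.simple t := by rw [← cs'.inv_simple t]; exact eq_inv_of_mul_eq_one_left this
    rw [← Commute.inv_left_iff]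
    simpa [e', mul_assoc] using hdxy

end Final

end CondTwo

/-- Conditions (0)–(3) on `(W,S)` transfer through an isomorphism `φ : W → W'`:
the target system satisfies (2'): there is no three-element subset `{s',t',u'} ⊆ S'`
with `m'(s',t')` and `m'(t',u')` both odd. -/
theorem condition_two_transfers {B B' : Type*} [Fintype B] [Fintype B']
    {W W' : Type*} [Group W] [Group W']
    {M : CoxeterMatrix B} (cs : CoxeterSystem M W)
    {M' : CoxeterMatrix B'} (cs' : CoxeterSystem M' W')
    (h0 : ∀ i j : B, orderOf (cs.simple i * cs.simple j) ≠ 0 →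
      Even (orderOf (cs.simple i * cs.simple j)) → orderOf (cs.simple i * cs.simple j) = 2)
    (h1 : ∀ i j : B, i ≠ j → Odd (orderOf (cs.simple i * cs.simple j)) →
      cs.IsMaxSpherical {i, j})
    (h2 : ¬ ∃ i j k : B, i ≠ j ∧ j ≠ k ∧ i ≠ k ∧
      Odd (orderOf (cs.simple i * cs.simple j)) ∧ Odd (orderOf (cs.simple j * cs.simple k)))
    (h3 : ∀ i j : B, i ≠ j → Odd (orderOf (cs.simple i * cs.simple j)) →
      {T : Set B | cs.IsMaxSpherical T ∧ (T ∩ {i, j}).Nonempty}.ncard ≤ 2)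
    (φ : W ≃* W') :
    ¬ ∃ i' j' k' : B', i' ≠ j' ∧ j' ≠ k' ∧ i' ≠ k' ∧
      Odd (orderOf (cs'.simple i' * cs'.simple j')) ∧
      Odd (orderOf (cs'.simple j' * cs'.simple k')) := by
  rintro ⟨s, t, u, hst, htu, hsu, hs, hu⟩
  obtain ⟨σ, hσ⟩ := CondTwo.exists_shape h0 h1 h2 h3
  exact CondTwo.no_odd_path hσ cs' φ hst htu hsu hs hu
end

section
/- Let (W,S) be a Coxeter system satisfying: (0) for all s,t ∈ S with m(s,t) even, m(s,t) = 2; (1) for all s ≠ t ∈ S with m(s,t) odd, {s,t} is a maximal spherical subset of S; (2) there is no three-element subset {s,t,u} ⊆ S such that m(s,t) and m(t,u) are both odd; (3) for all s ≠ t ∈ S with m(s,t) odd, the number of maximal spherical subsets of S intersecting {s,t} is at most two. Let (W',S') be a Coxeter system and suppose there exists a group isomorphism φ : W → W'. Then for each s' ≠ t' ∈ S' with m'(s',t') odd, the number of maximal spherical subsets of S' intersecting {s',t'} is at most two. -/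
namespace GeomRep

open Real

set_option linter.unusedSectionVars false

/-! ### The geometric representation -/

section Geometric

variable {B : Type*} [Fintype B]

open Classical in
/-- The simple root `α i`, a standard basis vector of `B → ℝ`. -/
noncomputable def root (i : B) : B → ℝ := Pi.single i 1

open Classical in
lemma root_apply (i j : B) : root i j = if j = i then 1 else 0 := by
  simp [root, Pi.single_apply]

lemma root_nonneg (i : B) : 0 ≤ root i := by
  classical
  intro j
  rw [root_apply]
  split_ifs <;> simp

/-- The entry `-2 cos (π / m)` of the Cartan matrix. For `m = ∞`, encoded as `M i j = 0`, the
convention `π / 0 = 0` gives the value `-2`, as it should. -/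
noncomputable def cartan (M : CoxeterMatrix B) (i j : B) : ℝ := -2 * cos (π / M i j)

lemma cartan_self (M : CoxeterMatrix B) (i : B) : cartan M i i = 2 := by
  simp [cartan]

lemma cartan_comm (M : CoxeterMatrix B) (i j : B) : cartan M i j = cartan M j i := by
  simp [cartan, M.symmetric i j]

/-- The simple coroot: the linear functional `v ↦ 2 ⟨α i, v⟩` of the Tits form. -/
noncomputable def coroot (M : CoxeterMatrix B) (i : B) : Module.Dual ℝ (B → ℝ) :=
  ∑ j, cartan M i j • LinearMap.proj j

lemma coroot_apply (M : CoxeterMatrix B) (i : B) (v : B → ℝ) :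
    coroot M i v = ∑ j, cartan M i j * v j := by
  simp [coroot]

lemma coroot_root (M : CoxeterMatrix B) (i j : B) : coroot M i (root j) = cartan M i j := by
  classical
  simp [coroot_apply, root_apply]

lemma coroot_root_self (M : CoxeterMatrix B) (i : B) : coroot M i (root i) = 2 := by
  rw [coroot_root, cartan_self]

/-- The simple reflection `v ↦ v - 2 ⟨α i, v⟩ α i`. -/
noncomputable def refl (M : CoxeterMatrix B) (i : B) : (B → ℝ) ≃ₗ[ℝ] (B → ℝ) :=
  Module.reflection (coroot_root_self M i)

lemma refl_apply (M : CoxeterMatrix B) (i : B) (v : B → ℝ) :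
    refl M i v = v - coroot M i v • root i :=
  Module.reflection_apply _ (coroot_root_self M i)

lemma refl_mul_self (M : CoxeterMatrix B) (i : B) : refl M i * refl M i = 1 := by
  ext1 v
  exact Module.involutive_reflection (coroot_root_self M i) v

lemma refl_comb (M : CoxeterMatrix B) (i j : B) (x y : ℝ) :
    refl M j (x • root i + y • root j) = (-cartan M i j * x - y) • root j + x • root i := by
  rw [refl_apply, map_add, map_smul, map_smul, coroot_root, coroot_root_self, cartan_comm M j i,
    smul_eq_mul, smul_eq_mul]
  module

/-- The vector `sin (x + θ) α i + sin x α j` with `θ = π / m`, a rotated multiple of `α i`. -/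
noncomputable def rot (M : CoxeterMatrix B) (i j : B) (x : ℝ) : B → ℝ :=
  sin (x + π / M i j) • root i + sin x • root j

lemma refl_rot (M : CoxeterMatrix B) (i j : B) (x : ℝ) :
    refl M j (rot M i j x) = rot M j i (x + π / M i j) := by
  rw [rot, refl_comb, rot, M.symmetric j i]
  congr 2
  have h1 := sin_add (x + π / M i j) (π / M i j)
  have h2 := sin_sub (x + π / M i j) (π / M i j)
  rw [add_sub_cancel_right] at h2
  rw [cartan]
  linarith

lemma refl_mul_refl_pow_rot (M : CoxeterMatrix B) (i j : B) (x : ℝ) (k : ℕ) :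
    ((refl M i * refl M j) ^ k) (rot M i j x) = rot M i j (x + k * (2 * (π / M i j))) := by
  induction k with
  | zero => simp
  | succ k ih =>
    rw [pow_succ', LinearEquiv.mul_apply, ih, LinearEquiv.mul_apply, refl_rot, refl_rot,
      M.symmetric j i]
    congr 1
    push_cast
    ring

lemma sin_angle_pos (M : CoxeterMatrix B) {i j : B} (hij : i ≠ j) (h0 : M i j ≠ 0) :
    0 < sin (π / M i j) := by
  have h1 := M.off_diagonal i j hij
  have h2 : (2 : ℝ) ≤ M i j := by exact_mod_cast (by omega : 2 ≤ M i j)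
  apply sin_pos_of_pos_of_lt_pi
  · positivity
  · rw [div_lt_iff₀ (by linarith)]
    nlinarith [pi_pos]

/-- The simple reflections satisfy the Coxeter relations: `σ i σ j` fixes the orthogonal
complement of the plane spanned by `α i, α j`, and rotates that plane by `2 π / m`. -/
lemma refl_liftable (M : CoxeterMatrix B) : M.IsLiftable (refl M) := by
  intro i j
  by_cases hij : i = j
  · subst hij
    simp [refl_mul_self]
  by_cases h0 : M i j = 0
  · simp [h0]
  have hs := sin_angle_pos M hij h0
  have hm : (M i j : ℝ) ≠ 0 := by exact_mod_cast h0
  have hE : ∀ x, ((refl M i * refl M j) ^ M i j) (rot M i j x) = rot M i j x := by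
    intro x
    rw [refl_mul_refl_pow_rot]
    have : x + M i j * (2 * (π / M i j)) = x + 2 * π := by field_simp
    rw [this, rot, rot, add_right_comm, sin_add_two_pi, sin_add_two_pi]
  have hi : ((refl M i * refl M j) ^ M i j) (root i) = root i := by
    have h : root i = (sin (π / M i j))⁻¹ • rot M i j 0 := by
      simp [rot, smul_smul, inv_mul_cancel₀ hs.ne']
    rw [h, map_smul, hE]
  have hj : ((refl M i * refl M j) ^ M i j) (root j) = root j := by
    have h : root j = (-(sin (π / M i j))⁻¹) • rot M i j (-(π / M i j)) := by
      simp [rot, smul_smul, inv_mul_cancel₀ hs.ne']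
    rw [h, map_smul, hE]
  ext1 z
  change _ = z
  set c := cos (π / M i j) with hc
  set s := sin (π / M i j) with hs'
  have hsc : s ^ 2 + c ^ 2 = 1 := sin_sq_add_cos_sq _
  set a := coroot M i z
  set b := coroot M j z
  -- `p` is the orthogonal projection of `z` to the plane.
  set p : B → ℝ := ((a + c * b) / (2 * s ^ 2)) • root i + ((c * a + b) / (2 * s ^ 2)) • root j
    with hp
  have hcij : cartan M i j = -2 * c := rfl
  have hcji : cartan M j i = -2 * c := by rw [cartan_comm, hcij]
  have hpi : coroot M i p = a := by
    rw [hp, map_add, map_smul, map_smul, coroot_root, coroot_root, cartan_self, hcij]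
    simp only [smul_eq_mul]
    field_simp
    linear_combination (-a) * hsc
  have hpj : coroot M j p = b := by
    rw [hp, map_add, map_smul, map_smul, coroot_root, coroot_root, cartan_self, hcji]
    simp only [smul_eq_mul]
    field_simp
    linear_combination (-b) * hsc
  have hq : ∀ k : ℕ, ((refl M i * refl M j) ^ k) (z - p) = z - p := by
    intro k
    induction k with
    | zero => simp
    | succ k ih =>
      have h1 : coroot M i (z - p) = 0 := by rw [map_sub, hpi, sub_self]
      have h2 : coroot M j (z - p) = 0 := by rw [map_sub, hpj, sub_self]
      rw [pow_succ, LinearEquiv.mul_apply, LinearEquiv.mul_apply, refl_apply M j, h2, zero_smul,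
        sub_zero, refl_apply M i, h1, zero_smul, sub_zero, ih]
  calc ((refl M i * refl M j) ^ M i j) z
      = ((refl M i * refl M j) ^ M i j) ((z - p) + p) := by rw [sub_add_cancel]
    _ = z := by rw [map_add, hq, hp, map_add, map_smul, map_smul, hi, hj, ← hp, sub_add_cancel]

variable {W : Type*} [Group W] {M : CoxeterMatrix B} (cs : CoxeterSystem M W)

/-- The geometric representation of a Coxeter group on `B → ℝ`. -/
noncomputable def rep : W →* ((B → ℝ) ≃ₗ[ℝ] (B → ℝ)) := cs.lift ⟨refl M, refl_liftable M⟩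

lemma rep_simple (i : B) : rep cs (cs.simple i) = refl M i :=
  cs.lift_apply_simple (refl_liftable M) i

lemma rep_mul_apply (u w : W) (v : B → ℝ) : rep cs (u * w) v = rep cs u (rep cs w v) := by
  rw [map_mul, LinearEquiv.mul_apply]

lemma rep_inv_rep (w : W) (v : B → ℝ) : rep cs w⁻¹ (rep cs w v) = v := by
  rw [← rep_mul_apply, inv_mul_cancel, map_one]
  rfl

lemma rep_rep_inv (w : W) (v : B → ℝ) : rep cs w (rep cs w⁻¹ v) = v := by
  rw [← rep_mul_apply, mul_inv_cancel, map_one]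
  rfl

lemma rep_simple_root (i : B) : rep cs (cs.simple i) (root i) = -root i := by
  rw [rep_simple]
  exact Module.reflection_apply_self (coroot_root_self M i)

/-- The coordinates of `α i` under an alternating product are consecutive terms of a sequence
given by a linear recursion. -/
lemma rep_alternating (i j : B) (a : ℕ → ℝ) (h0 : a 0 = 0) (h1 : a 1 = 1)
    (ha : ∀ k, a (k + 2) = -cartan M i j * a (k + 1) - a k) (k : ℕ) :
    rep cs (cs.wordProd (CoxeterSystem.alternatingWord i j k)) (root i) =
      if Even k then a (k + 1) • root i + a k • root j
      else a (k + 1) • root j + a k • root i := by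
  induction k with
  | zero => simp [CoxeterSystem.alternatingWord, h0, h1]
  | succ k ih =>
    rw [CoxeterSystem.alternatingWord_succ', cs.wordProd_cons, rep_mul_apply, ih]
    by_cases hk : Even k
    · have hk' : ¬ Even (k + 1) := by simpa [Nat.even_add_one] using hk
      rw [if_pos hk, if_pos hk, if_neg hk', rep_simple, refl_comb, ha]
    · have hk' : Even (k + 1) := by simpa [Nat.even_add_one] using hk
      rw [if_neg hk, if_neg hk, if_pos hk', rep_simple, refl_comb, ha, cartan_comm]

/-- Positivity in a dihedral group: a word alternating between `i` and `j` that ends in `j` and is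
shorter than the braid word maps `α i` to a nonnegative combination of `α i` and `α j`. -/
lemma exists_rep_alternating {i j : B} (hij : i ≠ j) {k : ℕ} (hk : M i j ≠ 0 → k < M i j) :
    ∃ p q : ℝ, 0 ≤ p ∧ 0 ≤ q ∧
      rep cs (cs.wordProd (CoxeterSystem.alternatingWord i j k)) (root i) =
        p • root i + q • root j := by
  obtain ⟨a, h0, h1, ha, hak, hak'⟩ : ∃ a : ℕ → ℝ, a 0 = 0 ∧ a 1 = 1 ∧
      (∀ k, a (k + 2) = -cartan M i j * a (k + 1) - a k) ∧ 0 ≤ a k ∧ 0 ≤ a (k + 1) := by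
    by_cases hm : M i j = 0
    · refine ⟨fun n => n, by simp, by simp, fun n => ?_, by positivity, by positivity⟩
      simp only [cartan, hm, Nat.cast_zero, div_zero, cos_zero]
      push_cast
      ring
    · have hs := sin_angle_pos M hij hm
      have hk1 := hk hm
      have hmpos : (0 : ℝ) < M i j := by exact_mod_cast Nat.pos_of_ne_zero hm
      have hnn : ∀ n : ℕ, n ≤ M i j → 0 ≤ sin (n * (π / M i j)) / sin (π / M i j) := by
        intro n hn
        have hn' : (n : ℝ) ≤ M i j := by exact_mod_cast hn
        refine div_nonneg (sin_nonneg_of_nonneg_of_le_pi (by positivity) ?_) hs.le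
        calc (n : ℝ) * (π / M i j) ≤ M i j * (π / M i j) := by gcongr
          _ = π := by field_simp
      refine ⟨fun n => sin (n * (π / M i j)) / sin (π / M i j), by simp, ?_, fun n => ?_,
        hnn k hk1.le, hnn (k + 1) hk1⟩
      · simp [div_self hs.ne']
      · have e1 := sin_add ((n + 1) * (π / M i j)) (π / M i j)
        have e2 := sin_sub ((n + 1) * (π / M i j)) (π / M i j)
        rw [show (n + 1) * (π / M i j) + π / M i j = (n + 2) * (π / M i j) by ring] at e1
        rw [show (n + 1) * (π / M i j) - π / M i j = n * (π / M i j) by ring] at e2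
        rw [cartan]
        push_cast
        rw [e1, e2]
        ring
  rw [rep_alternating cs i j a h0 h1 ha k]
  split_ifs
  · exact ⟨_, _, hak', hak, rfl⟩
  · exact ⟨_, _, hak, hak', add_comm _ _⟩

/-- Remove letters alternately `j, i, j, …` from the right end of `w` as long as the length drops.
What remains has neither `i` nor `j` as a right descent, and if `i` is not a descent of `w` then
fewer than `M i j` letters were removed. -/
lemma exists_dihedral_decomp {w : W} {i j : B} (hi : ¬ cs.IsRightDescent w i)
    (hj : cs.IsRightDescent w j) :
    ∃ (v : W) (k : ℕ), w = v * cs.wordProd (CoxeterSystem.alternatingWord i j k) ∧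
      cs.length v < cs.length w ∧ (M i j ≠ 0 → k < M i j) ∧
      ¬ cs.IsRightDescent v i ∧ ¬ cs.IsRightDescent v j := by
  classical
  set P : ℕ → W := fun k => cs.wordProd (CoxeterSystem.alternatingWord i j k) with hP
  set a : ℕ → B := fun k => if Even k then j else i with hadef
  have hPs : ∀ k, P (k + 1) = cs.simple (a k) * P k := fun k => by
    simp only [hP, CoxeterSystem.alternatingWord_succ', cs.wordProd_cons, hadef]
  have hvs : ∀ k, w * (P (k + 1))⁻¹ = w * (P k)⁻¹ * cs.simple (a k) := fun k => by
    rw [hPs, mul_inv_rev, cs.inv_simple, mul_assoc]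
  have hex : ∃ k, cs.length (w * (P (k + 1))⁻¹) + (k + 1) ≠ cs.length w :=
    ⟨cs.length w, by omega⟩
  set k := Nat.find hex with hkdef
  have hfail := Nat.find_spec hex
  rw [← hkdef] at hfail
  have hle : ∀ l ≤ k, cs.length (w * (P l)⁻¹) + l = cs.length w := by
    intro l hl
    cases l with
    | zero => simp [hP, CoxeterSystem.alternatingWord]
    | succ l => exact not_not.mp (Nat.find_min hex (by omega))
  have hk1 : 1 ≤ k := by
    by_contra hk0
    have hk0 : k = 0 := by omega
    rw [hk0, hPs] at hfail
    apply hfail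
    simpa [hP, hadef, CoxeterSystem.alternatingWord] using cs.isRightDescent_iff.mp hj
  refine ⟨w * (P k)⁻¹, k, by simp [hP], by have := hle k le_rfl; omega, ?_, ?_⟩
  · intro hm
    by_contra hkm
    have hlen := hle (M i j) (by omega)
    have hbraid : P (M i j) = cs.wordProd (CoxeterSystem.alternatingWord j i (M i j)) := by
      have := cs.wordProd_braidWord_eq i j
      rwa [CoxeterSystem.braidWord, CoxeterSystem.braidWord, M.symmetric j i] at this
    obtain ⟨n, hn⟩ : ∃ n, M i j = n + 1 := ⟨M i j - 1, by omega⟩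
    have hPn : P (M i j) = P n * cs.simple i := by
      rw [hbraid, hn, CoxeterSystem.alternatingWord_succ, cs.wordProd_concat]
    have hw : w * cs.simple i = w * (P (M i j))⁻¹ * P n := by
      rw [hPn]
      simp [mul_assoc]
    have h1 := cs.length_mul_le (w * (P (M i j))⁻¹) (P n)
    have h2 : cs.length (P n) ≤ n := by
      simpa using cs.length_wordProd_le (CoxeterSystem.alternatingWord i j n)
    have h3 := cs.not_isRightDescent_iff.mp hi
    rw [hw] at h3
    omega
  · have hak : ¬ cs.IsRightDescent (w * (P k)⁻¹) (a k) := by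
      rw [cs.isRightDescent_iff, ← hvs]
      have := hle k le_rfl
      omega
    obtain ⟨l, hl⟩ : ∃ l, k = l + 1 := ⟨k - 1, by omega⟩
    have hal : ¬ cs.IsRightDescent (w * (P k)⁻¹) (a l) := by
      rw [hl, hvs, ← cs.isRightDescent_iff_not_isRightDescent_mul, cs.isRightDescent_iff, ← hvs]
      have h1 := hle l (by omega)
      have h2 := hle (l + 1) (by omega)
      omega
    by_cases hev : Even l
    · have e1 : a l = j := if_pos hev
      have e2 : a k = i := if_neg (by rw [hl]; simpa [Nat.even_add_one] using hev)
      rw [e1] at hal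
      rw [e2] at hak
      exact ⟨hak, hal⟩
    · have e1 : a l = i := if_neg hev
      have e2 : a k = j := if_pos (by rw [hl]; simpa [Nat.even_add_one] using hev)
      rw [e1] at hal
      rw [e2] at hak
      exact ⟨hal, hak⟩

/-- If `ℓ (w s_i) > ℓ w` then `w α_i` is a positive root. -/
lemma rep_root_nonneg (w : W) (i : B) (h : ¬ cs.IsRightDescent w i) :
    0 ≤ rep cs w (root i) := by
  induction hn : cs.length w using Nat.strong_induction_on generalizing w i with
  | _ n ih =>
    by_cases hw : w = 1
    · subst hw
      simpa using root_nonneg i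
    obtain ⟨j, hj⟩ := cs.exists_rightDescent_of_ne_one hw
    have hij : i ≠ j := by
      rintro rfl
      exact h hj
    obtain ⟨v, k, hwv, hlt, hk, hvi, hvj⟩ := exists_dihedral_decomp cs h hj
    obtain ⟨p, q, hp, hq, hpq⟩ := exists_rep_alternating cs hij hk
    rw [hwv, rep_mul_apply, hpq, map_add, map_smul, map_smul]
    exact add_nonneg (smul_nonneg hp (ih _ (hn ▸ hlt) v i hvi rfl))
      (smul_nonneg hq (ih _ (hn ▸ hlt) v j hvj rfl))

lemma rep_root_nonpos (w : W) (i : B) (h : cs.IsRightDescent w i) :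
    rep cs w (root i) ≤ 0 := by
  have h1 := rep_root_nonneg cs (w * cs.simple i) i
    (cs.isRightDescent_iff_not_isRightDescent_mul.mp h)
  rw [rep_mul_apply, rep_simple_root, map_neg] at h1
  exact neg_nonneg.mp h1

end Geometric

/-! ### Positive roots and the dual action -/

section Roots

variable {B : Type*} [Fintype B] {W : Type*} [Group W] {M : CoxeterMatrix B}
  (cs : CoxeterSystem M W)

/-- The Tits form, doubled. -/
noncomputable def form (M : CoxeterMatrix B) (v u : B → ℝ) : ℝ := ∑ i, v i * coroot M i u

lemma form_comm (v u : B → ℝ) : form M v u = form M u v := by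
  simp only [form, coroot_apply, Finset.mul_sum]
  rw [Finset.sum_comm]
  refine Finset.sum_congr rfl fun i _ => Finset.sum_congr rfl fun j _ => ?_
  rw [cartan_comm]
  ring

lemma form_root_left (i : B) (u : B → ℝ) : form M (root i) u = coroot M i u := by
  classical
  simp [form, root_apply]

lemma form_sub_smul_self (i : B) (c : ℝ) (v : B → ℝ) :
    form M (v - c • root i) (v - c • root i) =
      form M v v - 2 * c * coroot M i v + 2 * c ^ 2 := by
  have hl : ∀ u, form M (v - c • root i) u = form M v u - c * form M (root i) u := by
    intro u
    simp only [form, Pi.sub_apply, Pi.smul_apply, smul_eq_mul, sub_mul, Finset.sum_sub_distrib,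
      Finset.mul_sum, mul_assoc]
  rw [hl, form_comm v, hl, form_root_left, form_root_left, map_sub, map_smul, coroot_root_self,
    smul_eq_mul]
  ring

lemma form_rep (w : W) (v : B → ℝ) : form M (rep cs w v) (rep cs w v) = form M v v := by
  induction w using cs.simple_induction_left with
  | one => simp
  | mul_simple_left w i ih =>
    rw [rep_mul_apply, rep_simple, refl_apply, form_sub_smul_self, ih]
    ring

/-- A root is a vector in the orbit of a simple root. -/
def IsRoot (v : B → ℝ) : Prop := ∃ (w : W) (i : B), v = rep cs w (root i)

/-- The set of positive roots: those with nonnegative coordinates. -/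
def posRoots : Set (B → ℝ) := {v | IsRoot cs v ∧ 0 ≤ v}

variable {cs}

lemma isRoot_root (i : B) : IsRoot cs (root i) := ⟨1, i, by simp⟩

lemma root_mem_posRoots (i : B) : root i ∈ posRoots cs := ⟨isRoot_root i, root_nonneg i⟩

lemma IsRoot.rep {v : B → ℝ} (hv : IsRoot cs v) (w : W) : IsRoot cs (rep cs w v) := by
  obtain ⟨u, i, rfl⟩ := hv
  exact ⟨w * u, i, (rep_mul_apply cs w u _).symm⟩

lemma IsRoot.neg {v : B → ℝ} (hv : IsRoot cs v) : IsRoot cs (-v) := by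
  obtain ⟨u, i, rfl⟩ := hv
  exact ⟨u * cs.simple i, i, by rw [rep_mul_apply, rep_simple_root, map_neg]⟩

lemma IsRoot.nonneg_or_nonpos {v : B → ℝ} (hv : IsRoot cs v) : 0 ≤ v ∨ v ≤ 0 := by
  obtain ⟨u, i, rfl⟩ := hv
  by_cases h : cs.IsRightDescent u i
  · exact Or.inr (rep_root_nonpos cs u i h)
  · exact Or.inl (rep_root_nonneg cs u i h)

lemma IsRoot.form_self {v : B → ℝ} (hv : IsRoot cs v) : form M v v = 2 := by
  obtain ⟨u, i, rfl⟩ := hv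
  rw [form_rep, form_root_left, coroot_root_self]

lemma IsRoot.ne_zero {v : B → ℝ} (hv : IsRoot cs v) : v ≠ 0 := by
  rintro rfl
  have := hv.form_self
  simp [form] at this

/-- The only positive root made negative by `s_i` is `α_i`. -/
lemma rep_simple_mem_posRoots {v : B → ℝ} (hv : v ∈ posRoots cs) {i : B} (hvi : v ≠ root i) :
    rep cs (cs.simple i) v ∈ posRoots cs := by
  classical
  refine ⟨hv.1.rep _, (hv.1.rep _).nonneg_or_nonpos.resolve_right fun hneg => hvi ?_⟩
  have hz : ∀ j, j ≠ i → v j = 0 := by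
    intro j hj
    have h1 := hneg j
    rw [rep_simple, refl_apply] at h1
    simp only [Pi.sub_apply, Pi.smul_apply, root_apply, if_neg hj, smul_zero, sub_zero,
      Pi.zero_apply] at h1
    exact le_antisymm h1 (hv.2 j)
  have hv' : v = v i • root i := by
    ext j
    by_cases hj : j = i
    · subst hj
      simp [root_apply]
    · simp [root_apply, hj, hz j hj]
  have hf := hv.1.form_self
  have hco : coroot M i v = 2 * v i := by
    rw [hv', map_smul, coroot_root_self]
    simp [root_apply, mul_comm]
  have hfv : form M v v = v i * coroot M i v := by
    rw [form, Finset.sum_eq_single i]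
    · intro j _ hj
      rw [hz j hj, zero_mul]
    · simp
  have h0 : 0 ≤ v i := hv.2 i
  have h1 : v i = 1 := by nlinarith
  rw [hv', h1, one_smul]

/-- Each `w` makes only finitely many positive roots negative. -/
lemma finite_inversions (w : W) : {v ∈ posRoots cs | ¬ 0 ≤ rep cs w v}.Finite := by
  induction w using cs.simple_induction_left with
  | one =>
    convert Set.finite_empty
    ext v
    simp only [Set.mem_ofPred_eq, Set.mem_empty_iff_false, iff_false, not_and, not_not]
    intro hv
    simpa using hv.2
  | mul_simple_left w i ih =>
    refine (ih.union (Set.finite_singleton (rep cs w⁻¹ (root i)))).subset ?_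
    rintro v ⟨hv, hneg⟩
    by_cases h : 0 ≤ rep cs w v
    · right
      by_contra hne
      apply hneg
      rw [rep_mul_apply]
      refine (rep_simple_mem_posRoots ⟨hv.1.rep w, h⟩ fun he => hne ?_).2
      rw [Set.mem_singleton_iff, ← he, rep_inv_rep]
    · exact Or.inl ⟨hv, h⟩

/-- The right action `y · w = y ∘ w` on linear functionals. -/
noncomputable def act (cs : CoxeterSystem M W) (y : Module.Dual ℝ (B → ℝ)) (w : W) :
    Module.Dual ℝ (B → ℝ) := y ∘ₗ (rep cs w).toLinearMap

lemma act_apply (y : Module.Dual ℝ (B → ℝ)) (w : W) (v : B → ℝ) :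
    act cs y w v = y (rep cs w v) := rfl

lemma act_mul (y : Module.Dual ℝ (B → ℝ)) (u w : W) :
    act cs y (u * w) = act cs (act cs y u) w := by
  ext1 v
  simp only [act_apply, rep_mul_apply]

lemma act_one (y : Module.Dual ℝ (B → ℝ)) : act cs y 1 = y := by
  ext1 v
  simp [act_apply]

lemma act_simple_eq {y : Module.Dual ℝ (B → ℝ)} {i : B} (h : y (root i) = 0) :
    act cs y (cs.simple i) = y := by
  ext1 v
  rw [act_apply, rep_simple, refl_apply, map_sub, map_smul, h, smul_zero, sub_zero]

lemma apply_root_eq_zero {y : Module.Dual ℝ (B → ℝ)} {i : B} (h : act cs y (cs.simple i) = y) :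
    y (root i) = 0 := by
  have := congrArg (fun f => f (root i)) h
  simp only [act_apply, rep_simple_root, map_neg] at this
  linarith

lemma act_eq_of_mem_parabolic {y : Module.Dual ℝ (B → ℝ)} {T : Set B}
    (hT : ∀ i ∈ T, y (root i) = 0) {u : W} (hu : u ∈ cs.parabolic T) : act cs y u = y := by
  induction hu using Subgroup.closure_induction with
  | mem u hu =>
    obtain ⟨i, hi, rfl⟩ := hu
    exact act_simple_eq (hT i hi)
  | one => exact act_one y
  | mul u w _ _ hu hw => rw [act_mul, hu, hw]
  | inv u _ hu =>
    nth_rw 1 [← hu]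
    rw [← act_mul, mul_inv_cancel, act_one]

/-- The functional lies in the closed fundamental chamber. -/
def Dominant (y : Module.Dual ℝ (B → ℝ)) : Prop := ∀ i, 0 ≤ y (root i)

/-- The functional lies in the interior of the Tits cone: it is positive on all but finitely many
positive roots. -/
def Interior (cs : CoxeterSystem M W) (y : Module.Dual ℝ (B → ℝ)) : Prop :=
  {v ∈ posRoots cs | y v ≤ 0}.Finite

lemma eq_sum_root (v : B → ℝ) : v = ∑ i, v i • root i := by
  classical
  ext j
  simp [root_apply]

lemma apply_eq_sum (y : Module.Dual ℝ (B → ℝ)) (v : B → ℝ) : y v = ∑ i, v i * y (root i) := by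
  conv_lhs => rw [eq_sum_root v]
  simp

lemma Dominant.apply_nonneg {y : Module.Dual ℝ (B → ℝ)} (hy : Dominant y) {v : B → ℝ}
    (hv : 0 ≤ v) : 0 ≤ y v := by
  rw [apply_eq_sum]
  exact Finset.sum_nonneg fun i _ => mul_nonneg (hv i) (hy i)

lemma Dominant.apply_root_eq_zero {y : Module.Dual ℝ (B → ℝ)} {u : W} (hy : Dominant y)
    (hyu : Dominant (act cs y u)) {i : B} (hi : cs.IsRightDescent u i) :
    act cs y u (root i) = 0 := by
  refine le_antisymm ?_ (hyu i)
  have := hy.apply_nonneg (neg_nonneg.mpr (rep_root_nonpos cs u i hi))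
  rw [map_neg] at this
  rw [act_apply]
  linarith

/-- Two functionals of the closed fundamental chamber in the same orbit are equal, and any element
carrying one to the other is in the parabolic subgroup of their common zero set. -/
lemma Dominant.act_eq {y : Module.Dual ℝ (B → ℝ)} {u : W} (hy : Dominant y)
    (hyu : Dominant (act cs y u)) :
    act cs y u = y ∧ u ∈ cs.parabolic {i | y (root i) = 0} := by
  induction hn : cs.length u using Nat.strong_induction_on generalizing u with
  | _ n ih =>
    by_cases hu : u = 1
    · subst hu
      exact ⟨act_one y, one_mem _⟩
    obtain ⟨i, hi⟩ := cs.exists_rightDescent_of_ne_one hu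
    have h0 := hy.apply_root_eq_zero hyu hi
    have hs : act cs y (u * cs.simple i) = act cs y u := by rw [act_mul, act_simple_eq h0]
    obtain ⟨h1, h2⟩ := ih _ (hn ▸ hi) (hs ▸ hyu) rfl
    rw [hs] at h1
    refine ⟨h1, ?_⟩
    rw [h1] at h0
    have h3 := mul_mem h2 (Subgroup.subset_closure ⟨i, h0, rfl⟩ :
      cs.simple i ∈ cs.parabolic {i | y (root i) = 0})
    rwa [cs.simple_mul_simple_cancel_right] at h3

/-- The stabilizer of a point of the closed chamber in the interior of the Tits cone is finite: it
acts faithfully on the finite set of roots vanishing at that point. -/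
lemma finite_stabilizer {y : Module.Dual ℝ (B → ℝ)} (hy : Dominant y) (hI : Interior cs y) :
    Finite {u : W // act cs y u = y} := by
  set Z : Set (B → ℝ) := {v | IsRoot cs v ∧ y v = 0} with hZ
  have hZfin : Z.Finite := by
    refine (hI.union (hI.image Neg.neg)).subset ?_
    rintro v ⟨hv, hv0⟩
    rcases hv.nonneg_or_nonpos with h | h
    · exact Or.inl ⟨⟨hv, h⟩, hv0.le⟩
    · exact Or.inr ⟨-v, ⟨⟨hv.neg, neg_nonneg.mpr h⟩, by simp [hv0]⟩, neg_neg v⟩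
  have := hZfin.to_subtype
  have hmaps : ∀ (u : {u : W // act cs y u = y}) (v : Z), rep cs u.1 v.1 ∈ Z := by
    rintro ⟨u, hu⟩ ⟨v, hv, hv0⟩
    exact ⟨hv.rep u, by rw [← act_apply, hu, hv0]⟩
  refine Finite.of_injective
    (fun (u : {u : W // act cs y u = y}) (v : Z) => (⟨rep cs u.1 v.1, hmaps u v⟩ : Z)) ?_
  rintro ⟨u, hu⟩ ⟨w, hw⟩ huw
  ext
  by_contra hne
  have hne1 : w⁻¹ * u ≠ 1 := fun h => hne (inv_mul_eq_one.mp h).symm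
  obtain ⟨i, hi⟩ := cs.exists_rightDescent_of_ne_one hne1
  have hw' : act cs y w⁻¹ = y := by
    nth_rw 1 [← hw]
    rw [← act_mul, mul_inv_cancel, act_one]
  have hst : act cs y (w⁻¹ * u) = y := by rw [act_mul, hw', hu]
  have h0 := hy.apply_root_eq_zero (hst.symm ▸ hy) hi
  rw [hst] at h0
  have h1 := congrArg Subtype.val (congrFun huw ⟨root i, isRoot_root i, h0⟩)
  have h2 := rep_root_nonpos cs _ i hi
  simp only at h1
  rw [rep_mul_apply, h1, rep_inv_rep] at h2
  exact (isRoot_root (cs := cs) i).ne_zero (le_antisymm h2 (root_nonneg i))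

lemma isSpherical_of_interior {y : Module.Dual ℝ (B → ℝ)} (hy : Dominant y)
    (hI : Interior cs y) : cs.IsSpherical {i | y (root i) = 0} := by
  have := finite_stabilizer hy hI
  exact Finite.of_injective
    (fun u : cs.parabolic {i | y (root i) = 0} =>
      (⟨u.1, act_eq_of_mem_parabolic (fun _ h => h) u.2⟩ : {u : W // act cs y u = y}))
    fun u w h => Subtype.ext (congrArg (fun x => x.1) h)

lemma Interior.act {y : Module.Dual ℝ (B → ℝ)} (hI : Interior cs y) (w : W) :
    Interior cs (act cs y w) := by
  refine ((finite_inversions (cs := cs) w).union (hI.image (rep cs w⁻¹))).subset ?_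
  rintro v ⟨hv, hle⟩
  by_cases h : 0 ≤ rep cs w v
  · exact Or.inr ⟨rep cs w v, ⟨⟨hv.1.rep w, h⟩, hle⟩, rep_inv_rep cs w v⟩
  · exact Or.inl ⟨hv, h⟩

/-- Every point in the interior of the Tits cone can be moved to the closed chamber: applying a
simple reflection `s_i` with `y α_i < 0` lowers the number of positive roots at which `y` is
negative. -/
lemma Interior.exists_dominant {y : Module.Dual ℝ (B → ℝ)} (hI : Interior cs y) :
    ∃ w : W, Dominant (GeomRep.act cs y w) := by
  have hfin : ∀ {y : Module.Dual ℝ (B → ℝ)}, Interior cs y →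
      {v ∈ posRoots cs | y v < 0}.Finite :=
    fun h => h.subset fun v hv => ⟨hv.1, hv.2.le⟩
  induction hn : {v ∈ posRoots cs | y v < 0}.ncard using Nat.strong_induction_on
    generalizing y with
  | _ n ih =>
    by_cases hd : Dominant y
    · exact ⟨1, by rwa [act_one]⟩
    obtain ⟨i, hi⟩ : ∃ i, y (root i) < 0 := by
      simpa [Dominant] using hd
    have hlt : {v ∈ posRoots cs | GeomRep.act cs y (cs.simple i) v < 0}.ncard < n := by
      have hmem : root i ∈ {v ∈ posRoots cs | y v < 0} := ⟨root_mem_posRoots i, hi⟩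
      have hpos : 0 < n := hn ▸ (Set.ncard_pos (hfin hI)).mpr ⟨_, hmem⟩
      have hle : {v ∈ posRoots cs | GeomRep.act cs y (cs.simple i) v < 0}.ncard ≤
          ({v ∈ posRoots cs | y v < 0} \ {root i}).ncard := by
        refine Set.ncard_le_ncard_of_injOn (rep cs (cs.simple i)) ?_
          (rep cs (cs.simple i)).injective.injOn ((hfin hI).subset Set.sdiff_subset)
        rintro v ⟨hv, hlt⟩
        have hvi : v ≠ root i := by
          rintro rfl
          rw [act_apply, rep_simple_root, map_neg] at hlt
          linarith
        refine ⟨⟨rep_simple_mem_posRoots hv hvi, hlt⟩, fun he => ?_⟩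
        have h1 : rep cs (cs.simple i) v = root i := he
        have h2 : v = -root i := by
          rw [← rep_simple_root cs i, ← h1, ← rep_mul_apply, cs.simple_mul_simple_self]
          simp
        have h3 := hv.2
        rw [h2] at h3
        exact (isRoot_root (cs := cs) i).ne_zero
          (le_antisymm (neg_nonneg.mp h3) (root_nonneg i))
      rw [Set.ncard_sdiff_singleton_of_mem hmem, hn] at hle
      omega
    obtain ⟨w, hw⟩ := ih _ hlt (hI.act (cs.simple i)) rfl
    exact ⟨cs.simple i * w, by rwa [act_mul]⟩

/-- The functional with value `1` at every simple root. -/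
noncomputable def height (B : Type*) [Fintype B] : Module.Dual ℝ (B → ℝ) :=
  ∑ i, LinearMap.proj i

lemma height_apply (v : B → ℝ) : height B v = ∑ i, v i := by simp [height]

lemma height_pos {v : B → ℝ} (hv : v ∈ posRoots cs) : 0 < height B v := by
  rw [height_apply]
  refine lt_of_le_of_ne (Finset.sum_nonneg fun i _ => hv.2 i) fun h => hv.1.ne_zero ?_
  ext i
  exact (Finset.sum_eq_zero_iff_of_nonneg fun i _ => hv.2 i).mp h.symm i (Finset.mem_univ i)

/-- A finite subgroup fixes a point in the interior of the Tits cone, namely the sum over an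
orbit. -/
lemma exists_fixed (F : Subgroup W) [Finite F] :
    ∃ y : Module.Dual ℝ (B → ℝ), Interior cs y ∧ ∀ f ∈ F, act cs y f = y := by
  have := Fintype.ofFinite F
  have happ : ∀ v, (∑ f : F, act cs (height B) f.1) v = ∑ f : F, height B (rep cs f.1 v) := by
    intro v
    simp [act_apply]
  refine ⟨∑ f : F, act cs (height B) f.1, ?_, ?_⟩
  · refine (Set.finite_iUnion fun f : F => finite_inversions (cs := cs) f.1).subset ?_
    rintro v ⟨hv, hle⟩
    by_contra hcon
    have hall : ∀ f : F, 0 ≤ rep cs f.1 v := by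
      intro f
      by_contra hf
      exact hcon (Set.mem_iUnion.mpr ⟨f, hv, hf⟩)
    rw [happ] at hle
    have : 0 < ∑ f : F, height B (rep cs f.1 v) :=
      Finset.sum_pos (fun f _ => height_pos ⟨hv.1.rep f.1, hall f⟩) ⟨1, Finset.mem_univ _⟩
    linarith
  · intro g hg
    ext1 v
    rw [act_apply, happ, happ]
    refine Fintype.sum_equiv (Equiv.mulRight (⟨g, hg⟩ : F)) _ _ fun f => ?_
    simp

/-- Tits: every finite subgroup is conjugate into a maximal spherical parabolic subgroup. -/
lemma exists_conj_le_parabolic (cs : CoxeterSystem M W) (F : Subgroup W) [Finite F] :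
    ∃ (g : W) (T : Set B), cs.IsMaxSpherical T ∧ ∀ f ∈ F, g⁻¹ * f * g ∈ cs.parabolic T := by
  obtain ⟨y, hI, hF⟩ := exists_fixed (cs := cs) F
  obtain ⟨w, hw⟩ := hI.exists_dominant
  have hsph := isSpherical_of_interior hw (hI.act w)
  obtain ⟨T, hT, hmax⟩ := Set.Finite.exists_le_maximal
    (Set.toFinite {T : Set B | cs.IsSpherical T}) hsph
  refine ⟨w, T, ⟨hmax.prop, fun U hU hTU => hmax.eq_of_ge hU hTU⟩, fun f hf => ?_⟩
  have hst : act cs (act cs y w) (w⁻¹ * f * w) = act cs y w := by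
    rw [← act_mul, ← mul_assoc, ← mul_assoc, mul_inv_cancel, one_mul, act_mul, hF f hf]
  exact Subgroup.closure_mono (Set.image_mono hT) (hw.act_eq (hst.symm ▸ hw)).2

/-- A point in the interior of the Tits cone that is fixed by a maximal spherical `W_T` lies in the
open face of type `T` of the closed chamber. Otherwise, moving from it towards that face, the first
point of the closed chamber met has a finite stabilizer generated by a set larger than `T`. -/
lemma dominant_of_maxSpherical {y : Module.Dual ℝ (B → ℝ)} (hI : Interior cs y) {T : Set B}
    (hT : cs.IsMaxSpherical T) (hfix : ∀ i ∈ T, act cs y (cs.simple i) = y) :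
    Dominant y ∧ {i | y (root i) = 0} = T := by
  classical
  have hzero : ∀ i ∈ T, y (root i) = 0 := fun i hi => apply_root_eq_zero (hfix i hi)
  suffices hpos : ∀ i ∉ T, 0 < y (root i) by
    constructor
    · intro i
      by_cases hi : i ∈ T
      · exact (hzero i hi).ge
      · exact (hpos i hi).le
    · ext i
      exact ⟨fun h => by_contra fun hi => (hpos i hi).ne' h, hzero i⟩
  by_contra! hcon
  obtain ⟨i₀, hi₀, hle₀⟩ := hcon
  obtain ⟨k, hkT, hk⟩ := Set.exists_min_image {i | i ∉ T} (fun i => y (root i)) (Set.toFinite _)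
    ⟨i₀, hi₀⟩
  have hkle : y (root k) ≤ 0 := (hk i₀ hi₀).trans hle₀
  -- `zT` is the standard point of the face of type `T`; the multiple `-y (root k)` of it makes
  -- the sum with `y` vanish at `k` and nonnegative at every simple root.
  let zT : Module.Dual ℝ (B → ℝ) := ∑ i, (if i ∈ T then (0 : ℝ) else 1) • LinearMap.proj i
  have hzT : ∀ i, zT (root i) = if i ∈ T then 0 else 1 := by
    intro i
    simp only [zT, LinearMap.sum_apply, LinearMap.smul_apply, LinearMap.proj_apply, root_apply,
      smul_eq_mul, mul_ite, mul_one, mul_zero]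
    simp
  have hzTd : Dominant zT := fun i => by
    rw [hzT]
    split_ifs <;> simp
  let z : Module.Dual ℝ (B → ℝ) := (-y (root k)) • zT + y
  have hzv : ∀ v, z v = -y (root k) * zT v + y v := fun v => by simp [z]
  have hzd : Dominant z := by
    intro i
    rw [hzv, hzT]
    split_ifs with h
    · simp [hzero i h]
    · have := hk i h
      linarith
  have hzI : Interior cs z := by
    refine Set.Finite.subset hI ?_
    rintro v ⟨hv, hle⟩
    refine ⟨hv, ?_⟩
    rw [hzv] at hle
    have := mul_nonneg (neg_nonneg.mpr hkle) (hzTd.apply_nonneg hv.2)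
    linarith
  have hTU : T ⊆ {i | z (root i) = 0} := by
    intro i hi
    simp [hzv, hzT, hi, hzero i hi]
  have hEq := hT.2 _ (isSpherical_of_interior hzd hzI) hTU
  have hkZ : k ∈ {i | z (root i) = 0} := by
    have : k ∉ T := hkT
    simp [hzv, hzT, this]
  rw [hEq] at hkZ
  exact hkT hkZ

/-- Maximal spherical parabolic subgroups having conjugates in a common finite subgroup come from
the same subset. -/
lemma maxSpherical_unique (cs : CoxeterSystem M W) (F : Subgroup W) [Finite F] {T₁ T₂ : Set B}
    (h₁ : cs.IsMaxSpherical T₁) (h₂ : cs.IsMaxSpherical T₂) (g₁ g₂ : W)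
    (hF₁ : ∀ i ∈ T₁, g₁⁻¹ * cs.simple i * g₁ ∈ F)
    (hF₂ : ∀ i ∈ T₂, g₂⁻¹ * cs.simple i * g₂ ∈ F) : T₁ = T₂ := by
  obtain ⟨y, hI, hF⟩ := exists_fixed (cs := cs) F
  have hfix : ∀ (g : W) (i : B), g⁻¹ * cs.simple i * g ∈ F →
      act cs (act cs y g⁻¹) (cs.simple i) = act cs y g⁻¹ := by
    intro g i hi
    conv_rhs => rw [← hF _ hi]
    rw [← act_mul, ← act_mul]
    congr 1
    group
  obtain ⟨hd₁, he₁⟩ := dominant_of_maxSpherical (hI.act g₁⁻¹) h₁ fun i hi => hfix g₁ i (hF₁ i hi)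
  obtain ⟨hd₂, he₂⟩ := dominant_of_maxSpherical (hI.act g₂⁻¹) h₂ fun i hi => hfix g₂ i (hF₂ i hi)
  have hrel : act cs (act cs y g₁⁻¹) (g₁ * g₂⁻¹) = act cs y g₂⁻¹ := by
    rw [← act_mul]
    congr 1
    group
  have := (hd₁.act_eq (hrel.symm ▸ hd₂)).1
  rw [hrel] at this
  rw [← he₁, ← he₂, this]

lemma simple_injective (cs : CoxeterSystem M W) {i j : B} (h : cs.simple i = cs.simple j) :
    i = j := by
  classical
  by_contra hij
  have h1 := congrArg (fun w => rep cs w (root i) i) h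
  simp only [rep_simple, refl_apply, Pi.sub_apply, Pi.smul_apply, root_apply, if_neg hij,
    coroot_root_self] at h1
  norm_num at h1

end Roots

/-! ### Odd dihedral groups and the transfer -/

section Transfer

/-- In a group generated by two involutions every element is `(ab)^k` or `(ab)^k a`. -/
lemma mem_closure_pair_involutions {G : Type*} [Group G] {a b : G} (ha : a * a = 1)
    (hb : b * b = 1) {g : G} (hg : g ∈ Subgroup.closure {a, b}) :
    ∃ k : ℤ, g = (a * b) ^ k ∨ g = (a * b) ^ k * a := by
  have ha' : a⁻¹ = a := inv_eq_of_mul_eq_one_right ha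
  have hb' : b⁻¹ = b := inv_eq_of_mul_eq_one_right hb
  have hbe : b = (a * b)⁻¹ * a := by rw [mul_inv_rev, ha', hb', mul_assoc, ha, mul_one]
  have hstep : ∀ x y : G, y = a ∨ y = b → (∃ k : ℤ, x = (a * b) ^ k ∨ x = (a * b) ^ k * a) →
      ∃ k : ℤ, x * y = (a * b) ^ k ∨ x * y = (a * b) ^ k * a := by
    rintro x y (rfl | rfl) ⟨k, rfl | rfl⟩
    · exact ⟨k, Or.inr rfl⟩
    · exact ⟨k, Or.inl (by rw [mul_assoc, ha, mul_one])⟩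
    · refine ⟨k - 1, Or.inr ?_⟩
      rw [zpow_sub_one, mul_assoc, ← hbe]
    · exact ⟨k + 1, Or.inl (by rw [zpow_add_one, mul_assoc])⟩
  induction hg using Subgroup.closure_induction_right with
  | one => exact ⟨0, Or.inl (by simp)⟩
  | mul_right x _ y hy ih => exact hstep x y hy ih
  | mul_inv_cancel x _ y hy ih =>
    refine hstep x y⁻¹ ?_ ih
    rcases hy with rfl | rfl
    · exact Or.inl ha'
    · exact Or.inr hb'

lemma finite_closure_pair_involutions {G : Type*} [Group G] {a b : G} (ha : a * a = 1)
    (hb : b * b = 1) (hab : orderOf (a * b) ≠ 0) :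
    Finite (Subgroup.closure {a, b}) := by
  have hfin : (Subgroup.zpowers (a * b) : Set G).Finite := by
    have : IsOfFinOrder (a * b) := orderOf_ne_zero_iff.mp hab
    exact finite_zpowers.mpr this
  refine ((hfin.union (hfin.image (· * a))).subset ?_).to_subtype
  intro g hg
  obtain ⟨k, rfl | rfl⟩ := mem_closure_pair_involutions ha hb hg
  · exact Or.inl ⟨k, rfl⟩
  · exact Or.inr ⟨_, ⟨k, rfl⟩, rfl⟩

variable {B : Type*} {W : Type*} [Group W] {M : CoxeterMatrix B} (cs : CoxeterSystem M W)

/-- If no odd label joins `{i, j}` to the other generators, then `s_i` and `s_j` are not conjugate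
to any of these, and there is a character which is `-1` at `s_i`, `s_j` and `1` elsewhere on the
generators. -/
lemma exists_character (i j : B)
    (hodd : ∀ k l : B, (k = i ∨ k = j) → ¬ (l = i ∨ l = j) → ¬ Odd (M k l)) :
    ∃ χ : W →* ℤˣ, χ (cs.simple i) = -1 ∧ χ (cs.simple j) = -1 ∧
      ∀ k, k ≠ i → k ≠ j → χ (cs.simple k) = 1 := by
  classical
  have hlift : M.IsLiftable (fun k => if k = i ∨ k = j then (-1 : ℤˣ) else 1) := by
    intro k l
    by_cases hk : k = i ∨ k = j <;> by_cases hl : l = i ∨ l = j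
    · simp [hk, hl]
    · have := Nat.not_odd_iff_even.mp (hodd k l hk hl)
      simp [hk, hl, this.neg_one_pow]
    · have := hodd l k hl hk
      rw [M.symmetric] at this
      have := Nat.not_odd_iff_even.mp this
      simp [hk, hl, this.neg_one_pow]
    · simp [hk, hl]
  refine ⟨cs.lift ⟨_, hlift⟩, ?_, ?_, ?_⟩
  · rw [cs.lift_apply_simple hlift]
    simp
  · rw [cs.lift_apply_simple hlift]
    simp
  · intro k hki hkj
    rw [cs.lift_apply_simple hlift]
    simp [hki, hkj]

lemma commute_of_orderOf_dvd_two {i j : B} (h : orderOf (cs.simple i * cs.simple j) ∣ 2) :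
    cs.simple i * cs.simple j = cs.simple j * cs.simple i := by
  have h1 := orderOf_dvd_iff_pow_eq_one.mp h
  rw [pow_two] at h1
  have h2 := eq_inv_of_mul_eq_one_left h1
  rwa [mul_inv_rev, cs.inv_simple, cs.inv_simple] at h2

/-- Under conditions (0) and (1), a maximal spherical subset whose parabolic subgroup is not
abelian is an odd edge. -/
lemma eq_pair_of_not_commute
    (h0 : ∀ i j : B, orderOf (cs.simple i * cs.simple j) ≠ 0 →
      Even (orderOf (cs.simple i * cs.simple j)) → orderOf (cs.simple i * cs.simple j) = 2)
    (h1 : ∀ i j : B, i ≠ j → Odd (orderOf (cs.simple i * cs.simple j)) →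
      cs.IsMaxSpherical {i, j}) {T : Set B} (hT : cs.IsMaxSpherical T) {a b : W}
    (ha : a ∈ cs.parabolic T) (hb : b ∈ cs.parabolic T) (hab : a * b ≠ b * a) :
    ∃ i j, i ≠ j ∧ Odd (orderOf (cs.simple i * cs.simple j)) ∧ T = {i, j} := by
  obtain ⟨i, hi, j, hj, hij⟩ : ∃ i ∈ T, ∃ j ∈ T,
      cs.simple i * cs.simple j ≠ cs.simple j * cs.simple i := by
    by_contra! hcon
    have hcomm : ∀ x ∈ cs.simple '' T, ∀ y ∈ cs.simple '' T, x * y = y * x := by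
      rintro _ ⟨i, hi, rfl⟩ _ ⟨j, hj, rfl⟩
      exact hcon i hi j hj
    have := Subgroup.isMulCommutative_closure hcomm
    exact hab (congrArg Subtype.val
      (mul_comm' (⟨a, ha⟩ : Subgroup.closure (cs.simple '' T)) ⟨b, hb⟩))
  have hne : i ≠ j := by
    rintro rfl
    exact hij rfl
  have hmem : ∀ k ∈ T, cs.simple k ∈ cs.parabolic T := fun k hk =>
    Subgroup.subset_closure ⟨k, hk, rfl⟩
  have hfin : orderOf (cs.simple i * cs.simple j) ≠ 0 := by
    have : Finite (cs.parabolic T) := hT.1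
    have h := orderOf_pos
      (⟨cs.simple i * cs.simple j, mul_mem (hmem i hi) (hmem j hj)⟩ : cs.parabolic T)
    rw [Subgroup.orderOf_mk] at h
    exact h.ne'
  have hodd : Odd (orderOf (cs.simple i * cs.simple j)) := by
    rw [← Nat.not_even_iff_odd]
    intro hev
    exact hij (commute_of_orderOf_dvd_two cs (h0 i j hfin hev).dvd)
  refine ⟨i, j, hne, hodd, (h1 i j hne hodd).2 T hT.1 ?_⟩
  rintro k (rfl | rfl)
  · exact hi
  · exact hj

end Transfer

end GeomRep

/-- Conditions (0)–(3) on `(W,S)` transfer through an isomorphism `φ : W → W'`: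
the target system satisfies (3'): if `s' ≠ t'` and `m'(s',t')` is odd then the number of
maximal spherical subsets of `S'` meeting `{s',t'}` is at most two. -/
theorem condition_three_transfers {B B' : Type*} [Fintype B] [Fintype B']
    {W W' : Type*} [Group W] [Group W']
    {M : CoxeterMatrix B} (cs : CoxeterSystem M W)
    {M' : CoxeterMatrix B'} (cs' : CoxeterSystem M' W')
    (h0 : ∀ i j : B, orderOf (cs.simple i * cs.simple j) ≠ 0 →
      Even (orderOf (cs.simple i * cs.simple j)) → orderOf (cs.simple i * cs.simple j) = 2)
    (h1 : ∀ i j : B, i ≠ j → Odd (orderOf (cs.simple i * cs.simple j)) →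
      cs.IsMaxSpherical {i, j})
    (h2 : ¬ ∃ i j k : B, i ≠ j ∧ j ≠ k ∧ i ≠ k ∧
      Odd (orderOf (cs.simple i * cs.simple j)) ∧ Odd (orderOf (cs.simple j * cs.simple k)))
    (h3 : ∀ i j : B, i ≠ j → Odd (orderOf (cs.simple i * cs.simple j)) →
      {T : Set B | cs.IsMaxSpherical T ∧ (T ∩ {i, j}).Nonempty}.ncard ≤ 2)
    (φ : W ≃* W') :
    ∀ i' j' : B', i' ≠ j' → Odd (orderOf (cs'.simple i' * cs'.simple j')) →
      {T' : Set B' | cs'.IsMaxSpherical T' ∧ (T' ∩ {i', j'}).Nonempty}.ncard ≤ 2 := by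
  intro i' j' hij' hodd'
  set a : W := φ.symm (cs'.simple i') with ha
  set b : W := φ.symm (cs'.simple j') with hb
  have hncomm : cs'.simple i' * cs'.simple j' ≠ cs'.simple j' * cs'.simple i' := by
    intro hcomm
    have hsq : (cs'.simple i' * cs'.simple j') ^ 2 = 1 := by
      rw [pow_two]
      nth_rw 2 [hcomm]
      simp [← mul_assoc]
    have hdvd := orderOf_dvd_of_pow_eq_one hsq
    have h1 : orderOf (cs'.simple i' * cs'.simple j') = 1 := by
      rcases (Nat.dvd_prime Nat.prime_two).mp hdvd with h | h
      · exact h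
      · rw [h] at hodd'
        exact absurd hodd' (by decide)
    have h2 := eq_inv_of_mul_eq_one_left (orderOf_eq_one_iff.mp h1)
    rw [cs'.inv_simple] at h2
    exact hij' (GeomRep.simple_injective cs' h2)
  have hab : a * b ≠ b * a := by
    intro h
    rw [ha, hb, ← map_mul, ← map_mul] at h
    exact hncomm (φ.symm.injective h)
  have haa : a * a = 1 := by rw [ha, ← map_mul, cs'.simple_mul_simple_self, map_one]
  have hbb : b * b = 1 := by rw [hb, ← map_mul, cs'.simple_mul_simple_self, map_one]
  have hord : orderOf (a * b) = orderOf (cs'.simple i' * cs'.simple j') := by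
    rw [ha, hb, ← map_mul]
    exact MulEquiv.orderOf_eq φ.symm _
  -- The dihedral group generated by `a` and `b` sits, up to conjugation, in an odd edge `{i, j}`.
  have hfin := GeomRep.finite_closure_pair_involutions haa hbb (by
    rw [hord]
    exact hodd'.pos.ne')
  obtain ⟨g, T₀, hT₀, hg⟩ := GeomRep.exists_conj_le_parabolic cs (Subgroup.closure {a, b})
  have hga := hg a (Subgroup.subset_closure (by simp))
  have hgb := hg b (Subgroup.subset_closure (by simp))
  have hgab : (g⁻¹ * a * g) * (g⁻¹ * b * g) ≠ (g⁻¹ * b * g) * (g⁻¹ * a * g) := by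
    intro h
    apply hab
    have : g⁻¹ * (a * b) * g = g⁻¹ * (b * a) * g := by
      simpa [mul_assoc] using h
    exact mul_left_cancel (mul_right_cancel this)
  obtain ⟨i, j, hij, hodd, rfl⟩ := GeomRep.eq_pair_of_not_commute cs h0 h1 hT₀ hga hgb hgab
  have hoddM : ∀ k l : B, (k = i ∨ k = j) → ¬ (l = i ∨ l = j) → ¬ Odd (M k l) := by
    intro k l hk hl hM
    have hkl : Odd (orderOf (cs.simple k * cs.simple l)) :=
      hM.of_dvd_nat (orderOf_dvd_of_pow_eq_one (cs.simple_mul_simple_pow k l))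
    have hodd2 : Odd (orderOf (cs.simple j * cs.simple i)) := by
      have : cs.simple j * cs.simple i = (cs.simple i * cs.simple j)⁻¹ := by simp
      rwa [this, orderOf_inv]
    rw [not_or] at hl
    rcases hk with rfl | rfl
    · exact h2 ⟨j, k, l, hij.symm, Ne.symm hl.1, Ne.symm hl.2, hodd2, hkl⟩
    · exact h2 ⟨i, k, l, hij, Ne.symm hl.2, Ne.symm hl.1, hodd, hkl⟩
  obtain ⟨χ, hχi, hχj, hχ⟩ := GeomRep.exists_character cs i j hoddM
  have hχab : χ a = χ b := by
    have h : (χ a * χ b) ^ orderOf (a * b) = 1 := by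
      rw [← map_mul, ← map_pow, pow_orderOf_eq_one, map_one]
    rw [hord] at h
    rcases Int.units_eq_one_or (χ a) with h1 | h1 <;>
      rcases Int.units_eq_one_or (χ b) with h2 | h2 <;>
      simp [h1, h2, hodd'.neg_one_pow] at h ⊢
  have hχconj : ∀ g x : W, χ (g⁻¹ * x * g) = χ x := by
    intro g x
    rw [map_mul, map_mul, mul_right_comm, ← map_mul, inv_mul_cancel, map_one, one_mul]
  -- Were `χ a = χ b = 1`, both would be conjugate to rotations of the dihedral group `W_{i,j}`,
  -- and these commute.
  have hχa : χ a = -1 := by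
    rcases Int.units_eq_one_or (χ a) with h | h
    swap
    · exact h
    exfalso
    have hrot : ∀ x ∈ cs.parabolic {i, j}, χ x = 1 →
        ∃ k : ℤ, x = (cs.simple i * cs.simple j) ^ k := by
      intro x hx hx1
      rw [CoxeterSystem.parabolic, Set.image_pair] at hx
      obtain ⟨k, rfl | rfl⟩ := GeomRep.mem_closure_pair_involutions
        (cs.simple_mul_simple_self i) (cs.simple_mul_simple_self j) hx
      · exact ⟨k, rfl⟩
      · simp [hχi, hχj] at hx1
    obtain ⟨k, hk⟩ := hrot _ hga (by rw [hχconj, h])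
    obtain ⟨l, hl⟩ := hrot _ hgb (by rw [hχconj, ← hχab, h])
    rw [hk, hl] at hgab
    exact hgab (zpow_mul_comm _ k l)
  have key : ∀ T' : Set B', cs'.IsMaxSpherical T' → ∃ (T : Set B) (g : W), cs.IsMaxSpherical T ∧
      ∀ x ∈ cs'.parabolic T', g⁻¹ * φ.symm x * g ∈ cs.parabolic T := by
    intro T' hT'
    have : Finite (cs'.parabolic T') := hT'.1
    have : Finite ((cs'.parabolic T').map φ.symm.toMonoidHom) :=
      (Set.Finite.image φ.symm (Set.toFinite (cs'.parabolic T' : Set W'))).to_subtype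
    obtain ⟨g, T, hT, hgT⟩ := GeomRep.exists_conj_le_parabolic cs
      ((cs'.parabolic T').map φ.symm.toMonoidHom)
    exact ⟨T, g, hT, fun x hx => hgT _ ⟨x, hx, rfl⟩⟩
  choose! F G hFmax hFG using key
  refine le_trans (Set.ncard_le_ncard_of_injOn F ?_ ?_ (Set.toFinite _)) (h3 i j hij hodd)
  · rintro T' ⟨hT', k', hk'T, hk'⟩
    refine ⟨hFmax T' hT', ?_⟩
    -- Otherwise `χ` would be trivial on `W_{F T'}`, which contains a conjugate of `a` or `b`.
    by_contra hemp
    have htriv : ∀ x ∈ cs.parabolic (F T'), χ x = 1 := by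
      intro x hx
      refine (Subgroup.closure_le (K := χ.ker)).mpr ?_ hx
      rintro _ ⟨k, hk, rfl⟩
      refine hχ k ?_ ?_
      · rintro rfl
        exact hemp ⟨k, hk, by simp⟩
      · rintro rfl
        exact hemp ⟨k, hk, by simp⟩
    have h := htriv _ (hFG T' hT' (cs'.simple k') (Subgroup.subset_closure ⟨k', hk'T, rfl⟩))
    rw [hχconj] at h
    have hk1 : χ (φ.symm (cs'.simple k')) = -1 := by
      rcases hk' with rfl | rfl
      · exact hχa
      · exact hχab ▸ hχa
    rw [hk1] at h
    exact absurd h (by decide)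
  · rintro T₁ ⟨hT₁, -⟩ T₂ ⟨hT₂, -⟩ hEq
    have : Finite (cs.parabolic (F T₁)) := (hFmax T₁ hT₁).1
    have : Finite ((cs.parabolic (F T₁)).map φ.toMonoidHom) :=
      (Set.Finite.image φ (Set.toFinite (cs.parabolic (F T₁) : Set W))).to_subtype
    refine GeomRep.maxSpherical_unique cs' ((cs.parabolic (F T₁)).map φ.toMonoidHom) hT₁ hT₂
      (φ (G T₁)) (φ (G T₂)) ?_ ?_
    · intro k hk
      exact ⟨_, hFG T₁ hT₁ (cs'.simple k) (Subgroup.subset_closure ⟨k, hk, rfl⟩), by simp⟩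
    · intro k hk
      rw [hEq]
      exact ⟨_, hFG T₂ hT₂ (cs'.simple k) (Subgroup.subset_closure ⟨k, hk, rfl⟩), by simp⟩
end
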